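/- Let p̄ = (p(1), p(2), …) be a sequence with 0 ≤ p(i) < 1 for all i such that ∏_{i=1}^∞ (1 − p(i)) > 0. Then for every first-order sentence ψ of the language L_+, the limit lim_{n→∞} Prob(n,p̄;ψ) exists. -/

import Mathlib

open FirstOrder Filter

namespace RandomGraph

/-- The set of potential edges of a graph on `Fin n` (pairs `(v,w)` with `v < w`).
Vertex `v : Fin n` represents the number `v + 1` of the interval `[n] = {1, …, n}`. -/
abbrev EdgeIdx (n : ℕ) := {e : Fin n × Fin n // e.1 < e.2}

/-- An outcome of the random graph on `[n]`: a choice of which potential edges are present. -/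
abbrev Sample (n : ℕ) := EdgeIdx n → Bool

/-- Adjacency of two vertices (described by their values in `Fin n`) in the outcome `ω`. -/
def adjVal {n : ℕ} (ω : Sample n) (a b : ℕ) : Prop :=
  ∃ e : EdgeIdx n, ω e = true ∧
    ((e.1.1.val = a ∧ e.1.2.val = b) ∨ (e.1.1.val = b ∧ e.1.2.val = a))

/-- Adjacency of two vertices in the outcome `ω`. -/
def sampleAdj {n : ℕ} (ω : Sample n) (v w : Fin n) : Prop := adjVal ω v.val w.val

/-- The probability of the outcome `ω` in the model `G(n, p̄)`: each pair of distinct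
vertices at distance `d` is an edge with probability `p d`, independently.  (The value `p 0` is
never used, since distinct vertices are at distance at least 1.) -/
noncomputable def sampleWeight (p : ℕ → ℝ) {n : ℕ} (ω : Sample n) : ℝ :=
  ∏ e : EdgeIdx n,
    (if ω e then p (e.1.2.val - e.1.1.val) else 1 - p (e.1.2.val - e.1.1.val))

/-- The probability of the outcome `ω` in the circular model `C(n, p̄)`: vertices `v, w` are
adjacent with probability `p (min |v-w| (n - |v-w|))`, independently. -/
noncomputable def cWeight (p : ℕ → ℝ) {n : ℕ} (ω : Sample n) : ℝ :=
  ∏ e : EdgeIdx n,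
    (if ω e then p (min (e.1.2.val - e.1.1.val) (n - (e.1.2.val - e.1.1.val)))
      else 1 - p (min (e.1.2.val - e.1.1.val) (n - (e.1.2.val - e.1.1.val))))

open scoped Classical in
/-- The probability of the event `P` in the random graph `G(n, p̄)`. -/
noncomputable def Pr (p : ℕ → ℝ) (n : ℕ) (P : Sample n → Prop) : ℝ :=
  ∑ ω : Sample n, if P ω then sampleWeight p ω else 0

open scoped Classical in
/-- The probability of the event `P` in the circular random graph `C(n, p̄)`. -/
noncomputable def cPr (p : ℕ → ℝ) (n : ℕ) (P : Sample n → Prop) : ℝ :=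
  ∑ ω : Sample n, if P ω then cWeight p ω else 0

/-! ### The language `L` of graphs (also used as the language `L^c`) -/

/-- An outcome `ω` of the random graph, viewed as a structure of `FirstOrder.Language.graph`,
the language with a single binary adjacency predicate. -/
def graphStructure {n : ℕ} (ω : Sample n) : Language.graph.Structure (Fin n) where
  RelMap | .adj => fun x => sampleAdj ω (x 0) (x 1)

/-- Satisfaction of a sentence of the language `L` in the outcome `ω`. -/
def SatL {n : ℕ} (ω : Sample n) (ψ : Language.graph.Sentence) : Prop :=
  @Language.Sentence.Realize _ _ (graphStructure ω) ψ

/-- `Prob(n, p̄; ψ)` for a sentence `ψ` of the language `L`. -/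
noncomputable def ProbL (p : ℕ → ℝ) (n : ℕ) (ψ : Language.graph.Sentence) : ℝ :=
  Pr p n fun ω => SatL ω ψ

/-- The probability that `C(n, p̄)` satisfies a sentence `ψ` of the language `L^c = L`. -/
noncomputable def cProbL (p : ℕ → ℝ) (n : ℕ) (ψ : Language.graph.Sentence) : ℝ :=
  cPr p n fun ω => SatL ω ψ

/-! ### The language `L₊` -/

/-- The constants of the language `L₊`: the first element `1` and the last element `n`. -/
inductive plusFunc : ℕ → Type
  | one : plusFunc 0
  | last : plusFunc 0

/-- The relations of `L₊`: adjacency and successor. -/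
inductive plusRel : ℕ → Type
  | adj : plusRel 2
  | succ : plusRel 2

/-- The language `L₊` with adjacency, successor (`x = y + 1`), and constants `1` and `n`. -/
def Lplus : Language := ⟨plusFunc, plusRel⟩

/-- An outcome `ω` of the random graph on `[m+1]`, as an `L₊`-structure. -/
def plusStructure {m : ℕ} (ω : Sample (m + 1)) : Lplus.Structure (Fin (m + 1)) where
  funMap | .one => fun _ => 0 | .last => fun _ => Fin.last m
  RelMap
    | .adj => fun x => sampleAdj ω (x 0) (x 1)
    | .succ => fun x => (x 0).val = (x 1).val + 1

/-- `Prob(n, p̄; ψ)` for a sentence `ψ` of `L₊` (set to `0` in the irrelevant case `n = 0`,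
where the constants cannot be interpreted). -/
noncomputable def ProbPlus (p : ℕ → ℝ) : ℕ → Lplus.Sentence → ℝ
  | 0, _ => 0
  | (m + 1), ψ => Pr p (m + 1) fun ω => @Language.Sentence.Realize _ _ (plusStructure ω) ψ

/-! ### The language `L≤` -/

/-- The relations of `L≤`: adjacency and linear order. -/
inductive leRel : ℕ → Type
  | adj : leRel 2
  | le : leRel 2

/-- The language `L≤` with adjacency and a linear order. -/
def Lle : Language := ⟨fun _ => Empty, leRel⟩

/-- An outcome `ω` of the random graph on `[n]`, as an `L≤`-structure. -/
def leStructure {n : ℕ} (ω : Sample n) : Lle.Structure (Fin n) where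
  funMap := fun f _ => Empty.elim f
  RelMap
    | .adj => fun x => sampleAdj ω (x 0) (x 1)
    | .le => fun x => x 0 ≤ x 1

/-- Satisfaction of a sentence of `L≤` in the outcome `ω`. -/
def SatLe {n : ℕ} (ω : Sample n) (ψ : Lle.Sentence) : Prop :=
  @Language.Sentence.Realize _ _ (leStructure ω) ψ

/-- `Prob(n, p̄; ψ)` for a sentence `ψ` of `L≤`. -/
noncomputable def ProbLe (p : ℕ → ℝ) (n : ℕ) (ψ : Lle.Sentence) : ℝ :=
  Pr p n fun ω => SatLe ω ψ

/-! ### The circular languages `L₊^c` and `L≤^c` -/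

/-- The relations of `L₊^c`: adjacency and cyclic successor. -/
inductive plusCRel : ℕ → Type
  | adj : plusCRel 2
  | succ : plusCRel 2

/-- The language `L₊^c`, with adjacency and cyclic successor (`x = y + 1 (mod n)`). -/
def LplusC : Language := ⟨fun _ => Empty, plusCRel⟩

/-- An outcome `ω` of the circular random graph on `[n]`, as an `L₊^c`-structure. -/
def plusCStructure {n : ℕ} (ω : Sample n) : LplusC.Structure (Fin n) where
  funMap := fun f _ => Empty.elim f
  RelMap
    | .adj => fun x => sampleAdj ω (x 0) (x 1)
    | .succ => fun x => (x 0).val = ((x 1).val + 1) % n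

/-- The probability that `C(n, p̄)` satisfies a sentence `ψ` of the language `L₊^c`. -/
noncomputable def cProbPlus (p : ℕ → ℝ) (n : ℕ) (ψ : LplusC.Sentence) : ℝ :=
  cPr p n fun ω => @Language.Sentence.Realize _ _ (plusCStructure ω) ψ

/-- The relations of `L≤^c`: adjacency and the ternary clockwise-order predicate. -/
inductive cycRel : ℕ → Type
  | adj : cycRel 2
  | btw : cycRel 3

/-- The language `L≤^c`, with adjacency and the ternary clockwise-order predicate `C`. -/
def Lcyc : Language := ⟨fun _ => Empty, cycRel⟩

/-- `C(a, b, c)`: `a ≤ b ≤ c` holds after some cyclic permutation of `(a, b, c)`. -/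
def cyclicBtw {n : ℕ} (a b c : Fin n) : Prop :=
  (a ≤ b ∧ b ≤ c) ∨ (b ≤ c ∧ c ≤ a) ∨ (c ≤ a ∧ a ≤ b)

/-- An outcome `ω` of the circular random graph on `[n]`, as an `L≤^c`-structure. -/
def cycStructure {n : ℕ} (ω : Sample n) : Lcyc.Structure (Fin n) where
  funMap := fun f _ => Empty.elim f
  RelMap
    | .adj => fun x => sampleAdj ω (x 0) (x 1)
    | .btw => fun x => cyclicBtw (x 0) (x 1) (x 2)

/-- Satisfaction of a sentence of `L≤^c` in the outcome `ω`. -/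
def SatCyc {n : ℕ} (ω : Sample n) (ψ : Lcyc.Sentence) : Prop :=
  @Language.Sentence.Realize _ _ (cycStructure ω) ψ

/-- The probability that `C(n, p̄)` satisfies a sentence `ψ` of the language `L≤^c`. -/
noncomputable def cProbCyc (p : ℕ → ℝ) (n : ℕ) (ψ : Lcyc.Sentence) : ℝ :=
  cPr p n fun ω => SatCyc ω ψ



/-! ### Local types -/

/-- A structure with two binary relations. -/
structure St (X : Type) where
  adj : X → X → Prop
  succ : X → X → Prop

/-- Two points are linked when some relation holds between them. -/
def St.Link {X : Type} (S : St X) (x y : X) : Prop :=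
  S.adj x y ∨ S.adj y x ∨ S.succ x y ∨ S.succ y x

theorem St.Link.symm {X : Type} {S : St X} {x y : X} (h : S.Link x y) : S.Link y x := by
  unfold St.Link at *; tauto

/-- `y` is at distance at most `d` from `x`. -/
def St.Near {X : Type} (S : St X) : ℕ → X → X → Prop
  | 0, x, y => x = y
  | d + 1, x, y => ∃ z, S.Near d x z ∧ (z = y ∨ S.Link z y)

theorem St.Near.step {X : Type} {S : St X} {d : ℕ} {x y : X} (h : S.Near d x y) :
    S.Near (d + 1) x y := ⟨y, h, Or.inl rfl⟩

theorem St.Near.refl {X : Type} (S : St X) (d : ℕ) (x : X) : S.Near d x x := by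
  induction d with
  | zero => rfl
  | succ d ih => exact ih.step

theorem St.Near.mono {X : Type} {S : St X} {d e : ℕ} {x y : X} (h : S.Near d x y) (hde : d ≤ e) :
    S.Near e x y := by
  induction hde with
  | refl => exact h
  | step _ ih => exact ih.step

theorem St.Near.trans {X : Type} {S : St X} {d e : ℕ} {x y z : X} (h : S.Near d x y)
    (h' : S.Near e y z) : S.Near (d + e) x z := by
  induction e generalizing z with
  | zero => cases h'; exact h
  | succ e ih =>
    obtain ⟨u, hu, hz⟩ := h'
    exact ⟨u, ih hu, hz⟩

theorem St.Near.of_link {X : Type} {S : St X} {x y : X} (h : S.Link x y) : S.Near 1 x y :=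
  ⟨x, rfl, Or.inr h⟩

theorem St.Near.symm {X : Type} {S : St X} {d : ℕ} {x y : X} (h : S.Near d x y) :
    S.Near d y x := by
  induction d generalizing y with
  | zero => exact Eq.symm h
  | succ d ih =>
    obtain ⟨z, hz, h'⟩ := h
    have h1 : S.Near 1 y z := by
      rcases h' with h' | h'
      · subst h'; exact St.Near.refl S 1 z
      · exact St.Near.of_link h'.symm
    have := h1.trans (ih hz)
    rwa [Nat.add_comm] at this

/-- The finite sets of local types of `i`-tuples of rank `j`. -/
def T : ℕ → ℕ → Type
  | 0, i => Fin i → Fin i → Prop × Prop × Prop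
  | j + 1, i => T j i × (Fin i → Set (T j (i + 1)))

theorem T_finite (j i : ℕ) : Finite (T j i) := by
  induction j generalizing i with
  | zero => unfold T; infer_instance
  | succ j ih =>
    have := ih i
    have := ih (i + 1)
    unfold T; infer_instance

/-- Extending a tuple by one point. -/
abbrev ext {X : Type} {i : ℕ} (w : Fin i → X) (x : X) : Fin (i + 1) → X :=
  Fin.snoc (α := fun _ => X) w x

/-- The local type of a tuple. -/
def tp {X : Type} (S : St X) : (j : ℕ) → (i : ℕ) → (Fin i → X) → T j i
  | 0, _, w => fun a b => (w a = w b, S.adj (w a) (w b), S.succ (w a) (w b))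
  | j + 1, i, w => (tp S j i w,
      fun a => {t | ∃ x, S.Near (2 ^ j) (w a) x ∧ t = tp S j (i + 1) (ext w x)})

theorem tp_zero_iff {X Y : Type} {S : St X} {S' : St Y} {i : ℕ} {w : Fin i → X}
    {w' : Fin i → Y} : tp S 0 i w = tp S' 0 i w' ↔ ∀ a b, (w a = w b ↔ w' a = w' b) ∧
      (S.adj (w a) (w b) ↔ S'.adj (w' a) (w' b)) ∧
      (S.succ (w a) (w b) ↔ S'.succ (w' a) (w' b)) := by
  constructor
  · intro h a b
    have := congrFun (congrFun h a) b
    simpa [tp, Prod.ext_iff] using this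
  · intro h
    funext a b
    have := h a b
    simpa [tp, Prod.ext_iff] using this

theorem tp_succ_iff {X Y : Type} {S : St X} {S' : St Y} {j i : ℕ} {w : Fin i → X}
    {w' : Fin i → Y} : tp S (j + 1) i w = tp S' (j + 1) i w' ↔ tp S j i w = tp S' j i w' ∧
      (∀ a x, S.Near (2 ^ j) (w a) x → ∃ y, S'.Near (2 ^ j) (w' a) y ∧
        tp S j (i + 1) (ext w x) = tp S' j (i + 1) (ext w' y)) ∧
      (∀ a y, S'.Near (2 ^ j) (w' a) y → ∃ x, S.Near (2 ^ j) (w a) x ∧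
        tp S j (i + 1) (ext w x) = tp S' j (i + 1) (ext w' y)) := by
  constructor
  · intro h
    have h1 := congrArg Prod.fst h
    have h2 := congrArg Prod.snd h
    refine ⟨h1, fun a x hx => ?_, fun a y hy => ?_⟩
    · have : tp S j (i + 1) (ext w x) ∈ (tp S (j + 1) i w).2 a := ⟨x, hx, rfl⟩
      rw [h2] at this
      exact this
    · have : tp S' j (i + 1) (ext w' y) ∈ (tp S' (j + 1) i w').2 a := ⟨y, hy, rfl⟩
      rw [← h2] at this
      obtain ⟨x, hx, he⟩ := this
      exact ⟨x, hx, he.symm⟩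
  · rintro ⟨h1, h2, h3⟩
    refine Prod.ext h1 (funext fun a => Set.ext fun t => ⟨?_, ?_⟩)
    · rintro ⟨x, hx, rfl⟩
      exact h2 a x hx
    · rintro ⟨y, hy, rfl⟩
      obtain ⟨x, hx, he⟩ := h3 a y hy
      exact ⟨x, hx, he.symm⟩

/-- Combination of far apart tuples. -/
theorem tp_comb {X Y : Type} {S : St X} {S' : St Y} {j : ℕ} : ∀ {i k l : ℕ}
    {u : Fin i → X} {u' : Fin i → Y} {v : Fin k → X} {v' : Fin k → Y}
    {w : Fin l → X} {w' : Fin l → Y},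
    tp S j i u = tp S' j i u' → tp S j k v = tp S' j k v' →
    (∀ a b, ¬ S.Near (2 ^ j) (u a) (v b)) → (∀ a b, ¬ S'.Near (2 ^ j) (u' a) (v' b)) →
    (∀ c, (∃ a, w c = u a ∧ w' c = u' a) ∨ (∃ b, w c = v b ∧ w' c = v' b)) →
    tp S j l w = tp S' j l w' := by
  induction j with
  | zero =>
    intro i k l u u' v v' w w' hu hv far far' hw
    rw [tp_zero_iff] at *
    have key : ∀ {Z : Type} (R : St Z) (x y : Z), ¬ R.Near (2 ^ 0) x y →
        ¬ x = y ∧ ¬ y = x ∧ ¬ R.adj x y ∧ ¬ R.adj y x ∧ ¬ R.succ x y ∧ ¬ R.succ y x := by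
      intro Z R x y h
      have h1 : ¬ R.Link x y := fun hl => h (St.Near.of_link hl)
      have h2 : ¬ x = y := by rintro rfl; exact h (St.Near.refl R _ _)
      unfold St.Link at h1
      have h3 : ¬ y = x := fun h => h2 h.symm
      tauto
    intro a b
    rcases hw a with ⟨a1, h1, h1'⟩ | ⟨a1, h1, h1'⟩ <;>
      rcases hw b with ⟨b1, h2, h2'⟩ | ⟨b1, h2, h2'⟩ <;> rw [h1, h1', h2, h2']
    · exact hu _ _
    · have := key _ _ _ (far a1 b1)
      have := key _ _ _ (far' a1 b1)
      tauto
    · have := key _ _ _ (far b1 a1)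
      have := key _ _ _ (far' b1 a1)
      tauto
    · exact hv _ _
  | succ j ih =>
    intro i k l u u' v v' w w' hu hv far far' hw
    rw [tp_succ_iff] at *
    obtain ⟨hu0, hu1, hu2⟩ := hu
    obtain ⟨hv0, hv1, hv2⟩ := hv
    have two : 2 ^ (j + 1) = 2 ^ j + 2 ^ j := by ring
    have pos : 2 ^ j ≤ 2 ^ (j + 1) := by rw [two]; exact Nat.le_add_left _ _
    have far0 : ∀ a b, ¬ S.Near (2 ^ j) (u a) (v b) := fun a b h => far a b (h.mono pos)
    have far0' : ∀ a b, ¬ S'.Near (2 ^ j) (u' a) (v' b) :=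
      fun a b h => far' a b (h.mono pos)
    -- extension on the first part
    have extu : ∀ x y, (∃ a, S.Near (2 ^ j) (u a) x) → (∃ a, S'.Near (2 ^ j) (u' a) y) →
        tp S j (i + 1) (ext u x) = tp S' j (i + 1) (ext u' y) →
        tp S j (l + 1) (ext w x) = tp S' j (l + 1) (ext w' y) := by
      rintro x y ⟨a, ha⟩ ⟨a', ha'⟩ h
      refine ih h hv0 ?_ ?_ ?_
      · intro c b hn
        refine Fin.lastCases ?_ (fun c => ?_) c hn
        · intro hn
          simp only [ext, Fin.snoc_last] at hn
          exact far a b (two ▸ ha.trans hn)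
        · intro hn
          simp only [ext, Fin.snoc_castSucc] at hn
          exact far0 c b hn
      · intro c b hn
        refine Fin.lastCases ?_ (fun c => ?_) c hn
        · intro hn
          simp only [ext, Fin.snoc_last] at hn
          exact far' a' b (two ▸ ha'.trans hn)
        · intro hn
          simp only [ext, Fin.snoc_castSucc] at hn
          exact far0' c b hn
      · intro c
        refine Fin.lastCases ?_ (fun c => ?_) c
        · exact Or.inl ⟨Fin.last _, by simp [ext], by simp [ext]⟩
        · rcases hw c with ⟨a, h, h'⟩ | ⟨b, h, h'⟩
          · exact Or.inl ⟨a.castSucc, by simp [ext, h], by simp [ext, h']⟩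
          · exact Or.inr ⟨b, by simp [ext, h], by simp [ext, h']⟩
    have extv : ∀ x y, (∃ a, S.Near (2 ^ j) (v a) x) → (∃ a, S'.Near (2 ^ j) (v' a) y) →
        tp S j (k + 1) (ext v x) = tp S' j (k + 1) (ext v' y) →
        tp S j (l + 1) (ext w x) = tp S' j (l + 1) (ext w' y) := by
      rintro x y ⟨a, ha⟩ ⟨a', ha'⟩ h
      refine ih hu0 h ?_ ?_ ?_
      · intro b c hn
        refine Fin.lastCases ?_ (fun c => ?_) c hn
        · intro hn
          simp only [ext, Fin.snoc_last] at hn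
          exact far b a (two ▸ (ha.trans hn.symm).symm)
        · intro hn
          simp only [ext, Fin.snoc_castSucc] at hn
          exact far0 b c hn
      · intro b c hn
        refine Fin.lastCases ?_ (fun c => ?_) c hn
        · intro hn
          simp only [ext, Fin.snoc_last] at hn
          exact far' b a' (two ▸ (ha'.trans hn.symm).symm)
        · intro hn
          simp only [ext, Fin.snoc_castSucc] at hn
          exact far0' b c hn
      · intro c
        refine Fin.lastCases ?_ (fun c => ?_) c
        · exact Or.inr ⟨Fin.last _, by simp [ext], by simp [ext]⟩
        · rcases hw c with ⟨a, h, h'⟩ | ⟨b, h, h'⟩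
          · exact Or.inl ⟨a, by simp [ext, h], by simp [ext, h']⟩
          · exact Or.inr ⟨b.castSucc, by simp [ext, h], by simp [ext, h']⟩
    refine ⟨ih hu0 hv0 far0 far0' hw, ?_, ?_⟩
    · intro c x hc
      rcases hw c with ⟨a, h, h'⟩ | ⟨b, h, h'⟩
      · rw [h] at hc
        obtain ⟨y, hy, he⟩ := hu1 a x hc
        exact ⟨y, h' ▸ hy, extu x y ⟨a, hc⟩ ⟨a, hy⟩ he⟩
      · rw [h] at hc
        obtain ⟨y, hy, he⟩ := hv1 b x hc
        exact ⟨y, h' ▸ hy, extv x y ⟨b, hc⟩ ⟨b, hy⟩ he⟩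
    · intro c y hc
      rcases hw c with ⟨a, h, h'⟩ | ⟨b, h, h'⟩
      · rw [h'] at hc
        obtain ⟨x, hx, he⟩ := hu2 a y hc
        exact ⟨x, h ▸ hx, extu x y ⟨a, hx⟩ ⟨a, hc⟩ he⟩
      · rw [h'] at hc
        obtain ⟨x, hx, he⟩ := hv2 b y hc
        exact ⟨x, h ▸ hx, extv x y ⟨b, hx⟩ ⟨b, hc⟩ he⟩

theorem tp_mono {X Y : Type} {S : St X} {S' : St Y} {j j' i : ℕ} {w : Fin i → X}
    {w' : Fin i → Y} (hj : j' ≤ j) (h : tp S j i w = tp S' j i w') :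
    tp S j' i w = tp S' j' i w' := by
  induction hj with
  | refl => exact h
  | step _ ih => exact ih (tp_succ_iff.1 h).1

/-- Embeddings which are isomorphisms near a tuple preserve its local type. -/
structure LocEmb {X Y : Type} (S : St X) (S' : St Y) (f : X → Y) (U : Set X) : Prop where
  inj : Function.Injective f
  adj : ∀ x ∈ U, ∀ x', S'.adj (f x) (f x') ↔ S.adj x x'
  adj' : ∀ x ∈ U, ∀ x', S'.adj (f x') (f x) ↔ S.adj x' x
  succ : ∀ x ∈ U, ∀ x', S'.succ (f x) (f x') ↔ S.succ x x'
  succ' : ∀ x ∈ U, ∀ x', S'.succ (f x') (f x) ↔ S.succ x' x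
  surj : ∀ x ∈ U, ∀ y, S'.Link (f x) y → ∃ x', y = f x'

theorem LocEmb.link {X Y : Type} {S : St X} {S' : St Y} {f : X → Y} {U : Set X}
    (H : LocEmb S S' f U) {x : X} (hx : x ∈ U) (x' : X) : S'.Link (f x) (f x') ↔ S.Link x x' := by
  unfold St.Link
  rw [H.adj x hx, H.adj' x hx, H.succ x hx, H.succ' x hx]

theorem LocEmb.near {X Y : Type} {S : St X} {S' : St Y} {f : X → Y} {U : Set X}
    (H : LocEmb S S' f U) {d : ℕ} {x : X} (hU : ∀ x', S.Near d x x' → x' ∈ U) {y : Y}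
    (h : S'.Near d (f x) y) : ∃ x', y = f x' ∧ S.Near d x x' := by
  induction d generalizing y with
  | zero => exact ⟨x, h.symm, rfl⟩
  | succ d ih =>
    obtain ⟨z, hz, hl⟩ := h
    obtain ⟨x1, rfl, hx1⟩ := ih (fun x' hx' => hU x' hx'.step) hz
    rcases hl with rfl | hl
    · exact ⟨x1, rfl, hx1.step⟩
    · have h1 := hU x1 hx1.step
      obtain ⟨x2, rfl⟩ := H.surj x1 h1 y hl
      exact ⟨x2, rfl, x1, hx1, Or.inr ((H.link h1 x2).1 hl)⟩

theorem LocEmb.near' {X Y : Type} {S : St X} {S' : St Y} {f : X → Y} {U : Set X}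
    (H : LocEmb S S' f U) {d : ℕ} {x : X} (hU : ∀ x', S.Near d x x' → x' ∈ U) {x' : X}
    (h : S.Near d x x') : S'.Near d (f x) (f x') := by
  induction d generalizing x' with
  | zero => exact congrArg f h
  | succ d ih =>
    obtain ⟨z, hz, hl⟩ := h
    refine ⟨f z, ih (fun x' hx' => hU x' hx'.step) hz, ?_⟩
    rcases hl with rfl | hl
    · exact Or.inl rfl
    · exact Or.inr ((H.link (hU z hz.step) x').2 hl)

theorem LocEmb.tp_eq {X Y : Type} {S : St X} {S' : St Y} {f : X → Y} {U : Set X}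
    (H : LocEmb S S' f U) {j i : ℕ} {w : Fin i → X}
    (hU : ∀ a x', S.Near (2 ^ j) (w a) x' → x' ∈ U) :
    tp S j i w = tp S' j i (fun a => f (w a)) := by
  induction j generalizing i with
  | zero =>
    rw [tp_zero_iff]
    intro a b
    have ha : w a ∈ U := hU a _ (St.Near.refl S _ _)
    exact ⟨H.inj.eq_iff.symm, (H.adj _ ha _).symm, (H.succ _ ha _).symm⟩
  | succ j ih =>
    have two : 2 ^ (j + 1) = 2 ^ j + 2 ^ j := by ring
    have pos : 2 ^ j ≤ 2 ^ (j + 1) := by rw [two]; exact Nat.le_add_left _ _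
    have hU0 : ∀ a x', S.Near (2 ^ j) (w a) x' → x' ∈ U := fun a x' h => hU a x' (h.mono pos)
    have key : ∀ a x, S.Near (2 ^ j) (w a) x →
        tp S j (i + 1) (ext w x) = tp S' j (i + 1) (ext (fun a => f (w a)) (f x)) := by
      intro a x hx
      have he : ext (fun a => f (w a)) (f x) = fun c => f (ext w x c) := by
        funext c
        refine Fin.lastCases ?_ (fun c => ?_) c <;> simp [ext]
      rw [he]
      refine ih ?_
      intro c
      refine Fin.lastCases ?_ (fun c => ?_) c
      · intro x' hx'
        simp only [ext, Fin.snoc_last] at hx'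
        exact hU a x' (two ▸ hx.trans hx')
      · intro x' hx'
        simp only [ext, Fin.snoc_castSucc] at hx'
        exact hU0 c x' hx'
    rw [tp_succ_iff]
    refine ⟨ih hU0, ?_, ?_⟩
    · intro a x hx
      exact ⟨f x, H.near' (hU0 a) hx, key a x hx⟩
    · intro a y hy
      obtain ⟨x, rfl, hx⟩ := H.near (hU0 a) hy
      exact ⟨x, hx, key a x hx⟩

/-! ### Back and forth -/

/-- Realizations of far away types with respect to tuples. -/
def Ext1 {X Y : Type} (S : St X) (S' : St Y) (K k : ℕ) (a b : X) : Prop :=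
  ∀ j < k, ∀ x, ¬ S.Near (2 ^ j) a x → ¬ S.Near (2 ^ j) b x → ∀ l ≤ K, ∀ w' : Fin l → Y,
    ∃ y, tp S j 1 (fun _ => x) = tp S' j 1 (fun _ => y) ∧ ∀ c, ¬ S'.Near (2 ^ j) (w' c) y

theorem ext_step {X Y : Type} {S : St X} {S' : St Y} {K k : ℕ} {a b : X}
    (H : Ext1 S S' K k a b) {j l : ℕ} (hj : j < k) (hl : l ≤ K) {w : Fin l → X} {w' : Fin l → Y}
    (ha : ∃ c, w c = a) (hb : ∃ c, w c = b)
    (h : tp S (j + 1) l w = tp S' (j + 1) l w') (x : X) :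
    ∃ y, tp S j (l + 1) (ext w x) = tp S' j (l + 1) (ext w' y) := by
  by_cases hx : ∃ c, S.Near (2 ^ j) (w c) x
  · obtain ⟨c, hc⟩ := hx
    obtain ⟨y, -, hy⟩ := (tp_succ_iff.1 h).2.1 c x hc
    exact ⟨y, hy⟩
  · push Not at hx
    obtain ⟨ca, rfl⟩ := ha
    obtain ⟨cb, rfl⟩ := hb
    obtain ⟨y, hy, hfar⟩ := H j hj x (hx ca) (hx cb) l hl w'
    refine ⟨y, tp_comb (tp_succ_iff.1 h).1 hy (fun c _ => hx c) (fun c _ => hfar c) ?_⟩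
    intro c
    refine Fin.lastCases ?_ (fun c => ?_) c
    · exact Or.inr ⟨0, by simp [ext], by simp [ext]⟩
    · exact Or.inl ⟨c, by simp [ext], by simp [ext]⟩

/-- Quantifier depth. -/
def qd : {i : ℕ} → Lplus.BoundedFormula Empty i → ℕ
  | _, .falsum => 0
  | _, .equal _ _ => 0
  | _, .rel _ _ => 0
  | _, .imp f g => max (qd f) (qd g)
  | _, .all f => qd f + 1

/-- The two-relation structure of an outcome. -/
def gSt {n : ℕ} (ω : Sample n) : St (Fin n) where
  adj := sampleAdj ω
  succ := fun x y => x.val = y.val + 1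

theorem term_real {m m' l i : ℕ} (ω : Sample (m + 1)) (ω' : Sample (m' + 1))
    (w : Fin l → Fin (m + 1)) (w' : Fin l → Fin (m' + 1)) (c0 c1 : Fin l) (f : Fin i → Fin l)
    (h0 : w c0 = 0) (h0' : w' c0 = 0) (h1 : w c1 = Fin.last m) (h1' : w' c1 = Fin.last m')
    (t : Lplus.Term (Empty ⊕ Fin i)) : ∃ c : Fin l,
      @Language.Term.realize _ _ (plusStructure ω) _ (Sum.elim Empty.elim (fun a => w (f a))) t
        = w c ∧
      @Language.Term.realize _ _ (plusStructure ω') _ (Sum.elim Empty.elim (fun a => w' (f a))) t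
        = w' c := by
  cases t with
  | var v =>
    rcases v with v | v
    · exact v.elim
    · exact ⟨f v, rfl, rfl⟩
  | @func n g ts =>
    cases g with
    | one => exact ⟨c0, h0.symm, h0'.symm⟩
    | last => exact ⟨c1, h1.symm, h1'.symm⟩

theorem game {m m' K k : ℕ} (ω : Sample (m + 1)) (ω' : Sample (m' + 1))
    (H : Ext1 (gSt ω) (gSt ω') K k 0 (Fin.last m))
    (H' : Ext1 (gSt ω') (gSt ω) K k 0 (Fin.last m')) {i : ℕ}
    (φ : Lplus.BoundedFormula Empty i) : ∀ {l j : ℕ}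
    (w : Fin l → Fin (m + 1)) (w' : Fin l → Fin (m' + 1)) (c0 c1 : Fin l) (f : Fin i → Fin l)
    (_ : w c0 = 0) (_ : w' c0 = 0) (_ : w c1 = Fin.last m) (_ : w' c1 = Fin.last m')
    (_ : qd φ ≤ j) (_ : j ≤ k) (_ : l + j ≤ K) (_ : tp (gSt ω) j l w = tp (gSt ω') j l w'),
    (@Language.BoundedFormula.Realize _ _ (plusStructure ω) _ _ φ Empty.elim (fun a => w (f a)) ↔
    @Language.BoundedFormula.Realize _ _ (plusStructure ω') _ _ φ Empty.elim
      (fun a => w' (f a))) := by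
  induction φ with
  | falsum => intros; exact Iff.rfl
  | equal t1 t2 =>
    intro l j w w' c0 c1 f h0 h0' h1 h1' hq hk hK h
    have h := tp_zero_iff.1 (tp_mono (Nat.zero_le j) h)
    obtain ⟨a, ha, ha'⟩ := term_real ω ω' w w' c0 c1 f h0 h0' h1 h1' t1
    obtain ⟨b, hb, hb'⟩ := term_real ω ω' w w' c0 c1 f h0 h0' h1 h1' t2
    unfold Language.BoundedFormula.Realize
    rw [ha, ha', hb, hb']
    exact (h a b).1
  | rel R ts =>
    intro l j w w' c0 c1 f h0 h0' h1 h1' hq hk hK h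
    have h := tp_zero_iff.1 (tp_mono (Nat.zero_le j) h)
    have key := fun q => term_real ω ω' w w' c0 c1 f h0 h0' h1 h1' (ts q)
    unfold Language.BoundedFormula.Realize
    cases R with
    | adj =>
      obtain ⟨a, ha, ha'⟩ := key 0
      obtain ⟨b, hb, hb'⟩ := key 1
      show sampleAdj ω _ _ ↔ sampleAdj ω' _ _
      beta_reduce
      rw [ha, ha', hb, hb']
      exact (h a b).2.1
    | succ =>
      obtain ⟨a, ha, ha'⟩ := key 0
      obtain ⟨b, hb, hb'⟩ := key 1
      show Fin.val _ = Fin.val _ + 1 ↔ Fin.val _ = Fin.val _ + 1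
      beta_reduce
      rw [ha, ha', hb, hb']
      exact (h a b).2.2
  | imp φ1 φ2 ih1 ih2 =>
    intro l j w w' c0 c1 f h0 h0' h1 h1' hq hk hK h
    have hq : max (qd φ1) (qd φ2) ≤ j := hq
    have e1 := ih1 w w' c0 c1 f h0 h0' h1 h1' (le_trans (le_max_left _ _) hq) hk hK h
    have e2 := ih2 w w' c0 c1 f h0 h0' h1 h1' (le_trans (le_max_right _ _) hq) hk hK h
    exact imp_congr e1 e2
  | all φ ih =>
    intro l j w w' c0 c1 f h0 h0' h1 h1' hq hk hK h
    have hq : qd φ + 1 ≤ j := hq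
    obtain ⟨j, rfl⟩ : ∃ j', j = j' + 1 := ⟨j - 1, by omega⟩
    have step : ∀ x y, tp (gSt ω) j (l + 1) (ext w x) = tp (gSt ω') j (l + 1) (ext w' y) →
        (@Language.BoundedFormula.Realize _ _ (plusStructure ω) _ _ φ Empty.elim
          (Fin.snoc (fun a => w (f a)) x) ↔
        @Language.BoundedFormula.Realize _ _ (plusStructure ω') _ _ φ Empty.elim
          (Fin.snoc (fun a => w' (f a)) y)) := by
      intro x y hxy
      have := ih (ext w x) (ext w' y) c0.castSucc c1.castSucc
        (ext (fun a => (f a).castSucc) (Fin.last _)) (by simp [ext, h0]) (by simp [ext, h0'])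
        (by simp [ext, h1]) (by simp [ext, h1']) (Nat.le_of_succ_le_succ hq) (by omega) (by omega)
        hxy
      convert this using 2
      · refine funext fun a => ?_
        refine Fin.lastCases ?_ (fun a => ?_) a <;> simp [ext]
      · refine funext fun a => ?_
        refine Fin.lastCases ?_ (fun a => ?_) a <;> simp [ext]
    constructor
    · intro hr y
      obtain ⟨x, hx⟩ := ext_step H' (by omega) (by omega) ⟨c0, h0'⟩ ⟨c1, h1'⟩ h.symm y
      exact (step x y hx.symm).1 (hr x)
    · intro hr x
      obtain ⟨y, hy⟩ := ext_step H (by omega) (by omega) ⟨c0, h0⟩ ⟨c1, h1⟩ h x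
      exact (step x y hy).2 (hr y)

/-! ### Finite product probability -/

/-- Weight of one coordinate. -/
noncomputable def wt (q : ℝ) (b : Bool) : ℝ := if b then q else 1 - q

theorem wt_nonneg {q : ℝ} (h0 : 0 ≤ q) (h1 : q ≤ 1) (b : Bool) : 0 ≤ wt q b := by
  unfold wt; split <;> linarith

theorem wt_sum (q : ℝ) : ∑ b, wt q b = 1 := by simp [wt]

open scoped Classical in
/-- Probability in a product of Bernoulli variables. -/
noncomputable def PE {E : Type} [Fintype E] [DecidableEq E] (q : E → ℝ) (P : (E → Bool) → Prop) : ℝ :=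
  ∑ ω : E → Bool, if P ω then ∏ e, wt (q e) (ω e) else 0

theorem Pr_eq (p : ℕ → ℝ) (n : ℕ) (P : Sample n → Prop) :
    Pr p n P = PE (fun e : EdgeIdx n => p (e.1.2.val - e.1.1.val)) P := by
  unfold Pr PE sampleWeight wt
  refine Finset.sum_congr (by congr) fun ω _ => ?_
  congr

section PE
variable {E : Type} [Fintype E] [DecidableEq E] {q : E → ℝ}

theorem sum_prod_bool (g : E → Bool → ℝ) :
    ∑ ω : E → Bool, ∏ e, g e (ω e) = ∏ e, ∑ b, g e b := by
  classical
  exact (Fintype.prod_sum g).symm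

theorem PE_true : PE q (fun _ => True) = 1 := by
  simp only [PE, if_true]
  rw [sum_prod_bool (fun e b => wt (q e) b)]
  exact Finset.prod_eq_one fun e _ => wt_sum _

theorem PE_mono' (hq : ∀ e, 0 ≤ q e ∧ q e ≤ 1) {P Q : (E → Bool) → Prop}
    (h : ∀ ω, ∏ e, wt (q e) (ω e) ≠ 0 → P ω → Q ω) : PE q P ≤ PE q Q := by
  classical
  unfold PE
  refine Finset.sum_le_sum fun ω _ => ?_
  have h0 : 0 ≤ ∏ e, wt (q e) (ω e) :=
    Finset.prod_nonneg fun e _ => wt_nonneg (hq e).1 (hq e).2 _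
  by_cases h1 : ∏ e, wt (q e) (ω e) = 0
  · simp [h1]
  · have := h ω h1
    split_ifs <;> first | exact le_rfl | exact h0 | tauto

theorem PE_mono (hq : ∀ e, 0 ≤ q e ∧ q e ≤ 1) {P Q : (E → Bool) → Prop}
    (h : ∀ ω, P ω → Q ω) : PE q P ≤ PE q Q := PE_mono' hq fun ω _ => h ω

theorem PE_nonneg (hq : ∀ e, 0 ≤ q e ∧ q e ≤ 1) (P : (E → Bool) → Prop) : 0 ≤ PE q P := by
  classical
  unfold PE
  refine Finset.sum_nonneg fun ω _ => ?_
  have h0 : 0 ≤ ∏ e, wt (q e) (ω e) :=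
    Finset.prod_nonneg fun e _ => wt_nonneg (hq e).1 (hq e).2 _
  split_ifs <;> first | exact le_rfl | exact h0

theorem PE_or (hq : ∀ e, 0 ≤ q e ∧ q e ≤ 1) (P Q : (E → Bool) → Prop) :
    PE q (fun ω => P ω ∨ Q ω) ≤ PE q P + PE q Q := by
  classical
  unfold PE
  rw [← Finset.sum_add_distrib]
  refine Finset.sum_le_sum fun ω _ => ?_
  have h0 : 0 ≤ ∏ e, wt (q e) (ω e) :=
    Finset.prod_nonneg fun e _ => wt_nonneg (hq e).1 (hq e).2 _
  by_cases hP : P ω <;> by_cases hQ : Q ω <;> simp [hP, hQ, h0]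

theorem PE_exists (hq : ∀ e, 0 ≤ q e ∧ q e ≤ 1) {ι : Type*} (s : Finset ι)
    (P : ι → (E → Bool) → Prop) :
    PE q (fun ω => ∃ i ∈ s, P i ω) ≤ ∑ i ∈ s, PE q (P i) := by
  classical
  induction s using Finset.induction_on with
  | empty => simp [PE]
  | insert a s ha ih =>
    rw [Finset.sum_insert ha]
    refine le_trans ?_ (add_le_add_right ih _)
    refine le_trans ?_ (PE_or hq _ _)
    refine PE_mono hq fun ω h => ?_
    simpa using h

theorem PE_and_not (P Q : (E → Bool) → Prop) :
    PE q (fun ω => P ω ∧ ¬ Q ω) = PE q P - PE q (fun ω => P ω ∧ Q ω) := by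
  classical
  unfold PE
  rw [← Finset.sum_sub_distrib]
  refine Finset.sum_congr rfl fun ω _ => ?_
  by_cases hP : P ω <;> by_cases hQ : Q ω <;> simp [hP, hQ]

/-- Comparison of events that agree off a bad event. -/
theorem PE_close (hq : ∀ e, 0 ≤ q e ∧ q e ≤ 1) {P Q D : (E → Bool) → Prop} {ε : ℝ}
    (hD : PE q D ≤ ε) (h : ∀ ω, ∏ e, wt (q e) (ω e) ≠ 0 → ¬ D ω → (P ω ↔ Q ω)) :
    |PE q P - PE q Q| ≤ ε := by
  have h1 : PE q P ≤ PE q Q + PE q D := by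
    refine le_trans (PE_mono' hq fun ω h0 hP => ?_) (PE_or hq Q D)
    by_cases hd : D ω
    · exact Or.inr hd
    · exact Or.inl ((h ω h0 hd).1 hP)
  have h2 : PE q Q ≤ PE q P + PE q D := by
    refine le_trans (PE_mono' hq fun ω h0 hP => ?_) (PE_or hq P D)
    by_cases hd : D ω
    · exact Or.inr hd
    · exact Or.inl ((h ω h0 hd).2 hP)
  rw [abs_le]
  constructor <;> linarith

/-- Probability of a cylinder. -/
theorem PE_cyl (A : Finset E) (s : E → Bool) :
    PE q (fun ω => ∀ e ∈ A, ω e = s e) = ∏ e ∈ A, wt (q e) (s e) := by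
  classical
  have h : ∀ ω : E → Bool, (if (∀ e ∈ A, ω e = s e) then ∏ e, wt (q e) (ω e) else 0) =
      ∏ e, (if e ∈ A then (if ω e = s e then wt (q e) (ω e) else 0) else wt (q e) (ω e)) := by
    intro ω
    split_ifs with h
    · refine Finset.prod_congr rfl fun e _ => ?_
      by_cases he : e ∈ A
      · simp [he, h e he]
      · simp [he]
    · push Not at h
      obtain ⟨e, he, hne⟩ := h
      refine (Finset.prod_eq_zero (Finset.mem_univ e) ?_).symm
      simp [he, hne]
  unfold PE
  have h2 : ∑ ω : E → Bool, (if (∀ e ∈ A, ω e = s e) then ∏ e, wt (q e) (ω e) else 0) =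
      ∏ e ∈ A, wt (q e) (s e) := by
    rw [Finset.sum_congr rfl fun ω _ => h ω]
    rw [sum_prod_bool (fun e b => if e ∈ A then (if b = s e then wt (q e) b else 0)
      else wt (q e) b)]
    rw [← Finset.prod_filter_mul_prod_filter_not Finset.univ (fun e => e ∈ A)]
    rw [Finset.prod_congr rfl (g := fun e => wt (q e) (s e)),
      Finset.prod_congr (s₁ := Finset.filter (fun e => ¬ e ∈ A) _) rfl (g := fun e => 1)]
    · simp
    · intro e he
      have he : e ∉ A := by simpa using he
      simp only [he, if_false]
      simpa using wt_sum (q e)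
    · intro e he
      have he : e ∈ A := by simpa using he
      simp [he]
  convert h2

/-- Independence of a cylinder and an event depending on other coordinates. -/
theorem PE_indep (A : Finset E) (s : E → Bool) (F : (E → Bool) → Prop)
    (hF : ∀ ω ω' : E → Bool, (∀ e ∉ A, ω e = ω' e) → (F ω ↔ F ω')) :
    PE q (fun ω => F ω ∧ ∀ e ∈ A, ω e = s e) = PE q F * ∏ e ∈ A, wt (q e) (s e) := by
  classical
  -- decompose over the coordinates off `A`
  have key : ∀ G : (E → Bool) → Prop, PE q G =
      ∑ x : {e // e ∈ A} → Bool, ∑ y : {e // ¬ e ∈ A} → Bool,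
        if G ((Equiv.piEquivPiSubtypeProd (fun e => e ∈ A) (fun _ => Bool)).symm (x, y))
        then (∏ e, wt (q e.1) (x e)) * ∏ e, wt (q e.1) (y e) else 0 := by
    intro G
    unfold PE
    rw [← Equiv.sum_comp (Equiv.piEquivPiSubtypeProd (fun e => e ∈ A) (fun _ => Bool)).symm,
      Fintype.sum_prod_type]
    refine Finset.sum_congr rfl fun x _ => Finset.sum_congr rfl fun y _ => ?_
    have : ∏ e, wt (q e) ((Equiv.piEquivPiSubtypeProd (fun e => e ∈ A) (fun _ => Bool)).symm
        (x, y) e) = (∏ e, wt (q e.1) (x e)) * ∏ e, wt (q e.1) (y e) := by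
      rw [← Fintype.prod_subtype_mul_prod_subtype (fun e => e ∈ A)]
      congr 1
      · refine Finset.prod_congr (by ext; simp) fun e _ => ?_
        simp [Equiv.piEquivPiSubtypeProd, e.2]
      · refine Finset.prod_congr (by ext; simp) fun e _ => ?_
        simp [Equiv.piEquivPiSubtypeProd, e.2]
    rw [this]
  set s0 : {e // e ∈ A} → Bool := fun e => s e.1 with hs0
  -- `F` does not depend on `x`
  have hF' : ∀ x y, F ((Equiv.piEquivPiSubtypeProd (fun e => e ∈ A) (fun _ => Bool)).symm (x, y)) ↔
      F ((Equiv.piEquivPiSubtypeProd (fun e => e ∈ A) (fun _ => Bool)).symm (s0, y)) := by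
    intro x y
    refine hF _ _ fun e he => ?_
    simp [Equiv.piEquivPiSubtypeProd, he]
  have hS : ∀ x y, (∀ e ∈ A, (Equiv.piEquivPiSubtypeProd (fun e => e ∈ A)
      (fun _ => Bool)).symm (x, y) e = s e) ↔ x = s0 := by
    intro x y
    constructor
    · intro h
      funext e
      have := h e.1 e.2
      simpa [Equiv.piEquivPiSubtypeProd, e.2] using this
    · rintro rfl e he
      simp [Equiv.piEquivPiSubtypeProd, he, hs0]
  set c : ℝ := ∑ y : {e // ¬ e ∈ A} → Bool,
    if F ((Equiv.piEquivPiSubtypeProd (fun e => e ∈ A) (fun _ => Bool)).symm (s0, y))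
    then ∏ e, wt (q e.1) (y e) else 0 with hc
  have h1 : PE q F = c := by
    rw [key]
    simp only [hF']
    have : ∀ x : {e // e ∈ A} → Bool, (∑ y : {e // ¬ e ∈ A} → Bool,
      if F ((Equiv.piEquivPiSubtypeProd (fun e => e ∈ A) (fun _ => Bool)).symm (s0, y))
      then (∏ e, wt (q e.1) (x e)) * ∏ e, wt (q e.1) (y e) else 0) =
      (∏ e, wt (q e.1) (x e)) * c := by
      intro x
      rw [hc, Finset.mul_sum]
      refine Finset.sum_congr rfl fun y _ => ?_
      split_ifs <;> simp
    rw [Finset.sum_congr rfl fun x _ => this x, ← Finset.sum_mul,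
      sum_prod_bool (fun (e : {e // e ∈ A}) b => wt (q e.1) b)]
    rw [Finset.prod_eq_one (fun e _ => wt_sum _), one_mul]
  rw [key, h1]
  simp only [hS, hF']
  rw [Finset.sum_eq_single s0]
  · rw [hc, Finset.sum_mul]
    refine Finset.sum_congr rfl fun y _ => ?_
    rw [← Finset.prod_coe_sort A]
    by_cases hf : F ((Equiv.piEquivPiSubtypeProd (fun e => e ∈ A) (fun _ => Bool)).symm (s0, y))
    · simp [hf, hs0, mul_comm]
    · simp [hf]
  · intro x _ hx
    simp [hx]
  · simp

/-- Restriction of a product along an injection. -/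
theorem PE_restrict {E' : Type} [Fintype E'] [DecidableEq E'] (g : E' → E) (hg : Function.Injective g)
    (P : (E' → Bool) → Prop) :
    PE q (fun ω => P (fun e => ω (g e))) = PE (fun e => q (g e)) P := by
  classical
  unfold PE
  rw [← Finset.sum_fiberwise_of_maps_to (s := Finset.univ) (t := Finset.univ)
    (g := fun (ω : E → Bool) (e : E') => ω (g e)) (fun _ _ => Finset.mem_univ _)]
  refine Finset.sum_congr rfl fun x _ => ?_
  have h1 : ∑ ω ∈ (Finset.univ.filter fun ω : E → Bool => (fun e => ω (g e)) = x),
      (∏ e, wt (q e) (ω e)) = ∏ e, wt (q (g e)) (x e) := by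
    rcases isEmpty_or_nonempty E' with he | he
    · have := PE_true (q := q)
      unfold PE at this
      rw [Finset.filter_true_of_mem]
      · simpa using this
      · intro ω _; exact Subsingleton.elim _ _
    have := PE_cyl (q := q) (Finset.univ.image g) (fun e => x (Function.invFun g e))
    rw [Finset.prod_image (fun a _ b _ h => hg h)] at this
    simp only [Function.leftInverse_invFun hg _] at this
    rw [← this]
    unfold PE
    rw [Finset.sum_filter]
    refine Finset.sum_congr rfl fun ω _ => ?_
    have : (fun e => ω (g e)) = x ↔
        ∀ e ∈ Finset.image g Finset.univ, ω e = x (Function.invFun g e) := by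
      simp [funext_iff, Function.leftInverse_invFun hg _]
    by_cases h : (fun e => ω (g e)) = x
    · rw [if_pos h, if_pos (this.1 h)]
    · rw [if_neg h, if_neg (fun h' => h (this.2 h'))]
  by_cases hP : P x
  · rw [if_pos hP]
    convert h1 using 1
    refine Finset.sum_congr rfl fun ω hω => ?_
    have : (fun e => ω (g e)) = x := by simpa using hω
    rw [if_pos (show P (fun e => ω (g e)) from this ▸ hP)]
  · rw [if_neg hP]
    refine Finset.sum_eq_zero fun ω hω => ?_
    have : (fun e => ω (g e)) = x := by simpa using hω
    rw [if_neg (show ¬ P (fun e => ω (g e)) from this ▸ hP)]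

end PE

/-! ### Estimates for the random graph -/

/-- The edge probabilities. -/
def qn (p : ℕ → ℝ) (n : ℕ) (e : EdgeIdx n) : ℝ := p (e.1.2.val - e.1.1.val)

theorem qn_bd {p : ℕ → ℝ} (hp : ∀ i, 0 ≤ p i ∧ p i < 1) (n : ℕ) (e : EdgeIdx n) :
    0 ≤ qn p n e ∧ qn p n e ≤ 1 := ⟨(hp _).1, (hp _).2.le⟩

theorem p_summable {p : ℕ → ℝ} (hp : ∀ i, 0 ≤ p i ∧ p i < 1) {c : ℝ} (hc : 0 < c)
    (hprod : ∀ n : ℕ, c ≤ ∏ i ∈ Finset.Icc 1 n, (1 - p i)) : Summable p := by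
  rw [← summable_nat_add_iff 1]
  refine summable_of_sum_range_le (c := - Real.log c) (fun i => (hp _).1) fun n => ?_
  have h1 : ∏ i ∈ Finset.Icc 1 n, (1 - p i) ≤ Real.exp (- ∑ i ∈ Finset.range n, p (i + 1)) := by
    induction n with
    | zero => simp
    | succ n ih =>
      rw [Finset.prod_Icc_succ_top (by omega), Finset.sum_range_succ, neg_add, Real.exp_add]
      refine mul_le_mul ih ?_ ?_ (Real.exp_pos _).le
      · have := Real.add_one_le_exp (- p (n + 1)); linarith
      · have := (hp (n + 1)).2; linarith
  have h2 := le_trans (hprod n) h1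
  have h3 := (Real.log_le_iff_le_exp hc).2 h2
  linarith

theorem p_tail {p : ℕ → ℝ} (hp : ∀ i, 0 ≤ p i ∧ p i < 1) (hs : Summable p) {ε : ℝ}
    (hε : 0 < ε) (D0 : ℕ) : ∃ D ≥ D0, ∀ s : Finset ℕ, (∀ i ∈ s, D < i) → ∑ i ∈ s, p i ≤ ε := by
  obtain ⟨s0, h0⟩ := summable_iff_vanishing_norm.1 hs ε hε
  refine ⟨max D0 (s0.sup id), le_max_left _ _, fun s hs => ?_⟩
  have hd : Disjoint s s0 := by
    rw [Finset.disjoint_left]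
    intro i hi hi0
    have h1 := hs i hi
    have h2 : i ≤ s0.sup id := Finset.le_sup (f := id) hi0
    have h3 := le_max_right D0 (s0.sup id)
    omega
  have := h0 s hd
  rw [Real.norm_eq_abs] at this
  exact (le_abs_self _).trans this.le

theorem p_subprod {p : ℕ → ℝ} (hp : ∀ i, 0 ≤ p i ∧ p i < 1) {c : ℝ}
    (hprod : ∀ n : ℕ, c ≤ ∏ i ∈ Finset.Icc 1 n, (1 - p i)) (s : Finset ℕ) (hs : ∀ i ∈ s, 1 ≤ i) :
    c ≤ ∏ i ∈ s, (1 - p i) := by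
  have hsub : s ⊆ Finset.Icc 1 (s.sup id) := fun i hi =>
    Finset.mem_Icc.2 ⟨hs i hi, Finset.le_sup (f := id) hi⟩
  refine le_trans (hprod (s.sup id)) ?_
  rw [← Finset.prod_sdiff hsub]
  refine mul_le_of_le_one_left ?_ ?_
  · exact Finset.prod_nonneg fun i _ => by linarith [(hp i).2]
  · refine Finset.prod_le_one (fun i _ => by linarith [(hp i).2]) (fun i _ => by linarith [(hp i).1])

theorem inj_diff1 {n : ℕ} (v : ℕ) (F : Finset (EdgeIdx n)) (h : ∀ e ∈ F, e.1.1.val = v) :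
    Set.InjOn (fun e : EdgeIdx n => e.1.2.val - e.1.1.val) (F : Set (EdgeIdx n)) := by
  intro e he e' he' hd
  have h1 := h e he
  have h2 := h e' he'
  have h3 : e.1.1.val < e.1.2.val := e.2
  have h4 : e'.1.1.val < e'.1.2.val := e'.2
  simp only at hd
  apply Subtype.ext
  apply Prod.ext <;> apply Fin.ext <;> omega

theorem inj_diff2 {n : ℕ} (v : ℕ) (F : Finset (EdgeIdx n)) (h : ∀ e ∈ F, e.1.2.val = v) :
    Set.InjOn (fun e : EdgeIdx n => e.1.2.val - e.1.1.val) (F : Set (EdgeIdx n)) := by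
  intro e he e' he' hd
  have h1 := h e he
  have h2 := h e' he'
  have h3 : e.1.1.val < e.1.2.val := e.2
  have h4 : e'.1.1.val < e'.1.2.val := e'.2
  simp only at hd
  apply Subtype.ext
  apply Prod.ext <;> apply Fin.ext <;> omega

theorem PE_edge {p : ℕ → ℝ} {n : ℕ} (e : EdgeIdx n) :
    PE (qn p n) (fun ω => ω e = true) = p (e.1.2.val - e.1.1.val) := by
  have := PE_cyl (q := qn p n) {e} (fun _ => true)
  simpa [wt, qn] using this

theorem PE_edges {p : ℕ → ℝ} (hp : ∀ i, 0 ≤ p i ∧ p i < 1) {n D : ℕ} {η : ℝ}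
    (hη : ∀ s : Finset ℕ, (∀ i ∈ s, D < i) → ∑ i ∈ s, p i ≤ η) (F : Finset (EdgeIdx n))
    (hF : ∀ e ∈ F, D < e.1.2.val - e.1.1.val)
    (hinj : Set.InjOn (fun e : EdgeIdx n => e.1.2.val - e.1.1.val) (F : Set (EdgeIdx n))) :
    PE (qn p n) (fun ω => ∃ e ∈ F, ω e = true) ≤ η := by
  refine le_trans (PE_exists (qn_bd hp n) F _) ?_
  simp only [PE_edge]
  rw [← Finset.sum_image (f := p) (g := fun e : EdgeIdx n => e.1.2.val - e.1.1.val) hinj]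
  refine hη _ fun i hi => ?_
  obtain ⟨e, he, rfl⟩ := Finset.mem_image.1 hi
  exact hF e he

/-- There is a long edge touching `V`. -/
def FarEdge {n : ℕ} (V : Finset ℕ) (D : ℕ) (ω : Sample n) : Prop :=
  ∃ e : EdgeIdx n, ω e = true ∧ (e.1.1.val ∈ V ∨ e.1.2.val ∈ V) ∧ D < e.1.2.val - e.1.1.val

theorem PE_far {p : ℕ → ℝ} (hp : ∀ i, 0 ≤ p i ∧ p i < 1) {n D : ℕ} {η : ℝ}
    (hη : ∀ s : Finset ℕ, (∀ i ∈ s, D < i) → ∑ i ∈ s, p i ≤ η) (V : Finset ℕ) :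
    PE (qn p n) (FarEdge V D) ≤ V.card * (2 * η) := by
  classical
  have h1 : PE (qn p n) (FarEdge V D) ≤ PE (qn p n) (fun ω => ∃ v ∈ V,
      ((∃ e ∈ Finset.univ.filter (fun e : EdgeIdx n => e.1.1.val = v ∧
          D < e.1.2.val - e.1.1.val), ω e = true) ∨
       (∃ e ∈ Finset.univ.filter (fun e : EdgeIdx n => e.1.2.val = v ∧
          D < e.1.2.val - e.1.1.val), ω e = true))) := by
    refine PE_mono (qn_bd hp n) ?_
    rintro ω ⟨e, he, hV | hV, hD⟩
    · exact ⟨_, hV, Or.inl ⟨e, by simp [hD], he⟩⟩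
    · exact ⟨_, hV, Or.inr ⟨e, by simp [hD], he⟩⟩
  refine h1.trans ((PE_exists (qn_bd hp n) V _).trans ?_)
  rw [← nsmul_eq_mul]
  refine Finset.sum_le_card_nsmul _ _ _ fun v _ => ?_
  refine (PE_or (qn_bd hp n) _ _).trans ?_
  rw [two_mul]
  refine add_le_add (PE_edges hp hη _ ?_ (inj_diff1 v _ ?_)) (PE_edges hp hη _ ?_ (inj_diff2 v _ ?_))
  all_goals
    intro e he
    have := (Finset.mem_filter.1 he).2
    first | exact this.2 | exact this.1

theorem prod_touch1 {p : ℕ → ℝ} (hp : ∀ i, 0 ≤ p i ∧ p i < 1) {c : ℝ} (hc : 0 < c)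
    (hprod : ∀ n : ℕ, c ≤ ∏ i ∈ Finset.Icc 1 n, (1 - p i)) {n : ℕ} (V : Finset ℕ)
    (F : Finset (EdgeIdx n)) (g : EdgeIdx n → ℕ) (hg : ∀ e ∈ F, g e ∈ V)
    (hinj : ∀ v, ∀ F' : Finset (EdgeIdx n), (∀ e ∈ F', g e = v) →
      Set.InjOn (fun e : EdgeIdx n => e.1.2.val - e.1.1.val) (F' : Set (EdgeIdx n))) :
    c ^ V.card ≤ ∏ e ∈ F, (1 - qn p n e) := by
  classical
  rw [← Finset.prod_fiberwise_of_maps_to hg, ← Finset.prod_const]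
  refine Finset.prod_le_prod (fun _ _ => hc.le) fun v _ => ?_
  have hi := hinj v (F.filter fun e => g e = v) (fun e he => (Finset.mem_filter.1 he).2)
  unfold qn
  rw [← Finset.prod_image (f := fun i => 1 - p i)
    (g := fun e : EdgeIdx n => e.1.2.val - e.1.1.val) hi]
  refine p_subprod hp hprod _ fun i hi => ?_
  obtain ⟨e, he, rfl⟩ := Finset.mem_image.1 hi
  have h3 : e.1.1.val < e.1.2.val := e.2
  show 1 ≤ e.1.2.val - e.1.1.val
  omega

theorem prod_touch {p : ℕ → ℝ} (hp : ∀ i, 0 ≤ p i ∧ p i < 1) {c : ℝ} (hc : 0 < c)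
    (hprod : ∀ n : ℕ, c ≤ ∏ i ∈ Finset.Icc 1 n, (1 - p i)) {n : ℕ} (V : Finset ℕ)
    (F : Finset (EdgeIdx n)) (hF : ∀ e ∈ F, e.1.1.val ∈ V ∨ e.1.2.val ∈ V) :
    c ^ V.card * c ^ V.card ≤ ∏ e ∈ F, (1 - qn p n e) := by
  classical
  rw [← Finset.prod_filter_mul_prod_filter_not F (fun e => e.1.1.val ∈ V)]
  have hq : ∀ e : EdgeIdx n, 0 ≤ 1 - qn p n e := fun e => by linarith [(qn_bd hp n e).2]
  refine mul_le_mul ?_ ?_ (pow_nonneg hc.le _) (Finset.prod_nonneg fun e _ => hq e)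
  · refine prod_touch1 hp hc hprod V _ (fun e => e.1.1.val) ?_ (fun v F' h => inj_diff1 v F' h)
    intro e he
    exact (Finset.mem_filter.1 he).2
  · refine prod_touch1 hp hc hprod V _ (fun e => e.1.2.val) ?_ (fun v F' h => inj_diff2 v F' h)
    intro e he
    obtain ⟨h1, h2⟩ := Finset.mem_filter.1 he
    exact (hF e h1).resolve_left h2

/-! ### Isolated copies -/

/-- `ω` contains an isolated copy of `η` at position `c`. -/
def IsoCopy {h n : ℕ} (η : Sample h) (ω : Sample n) (c : ℕ) : Prop :=
  c + h ≤ n ∧ ∀ v w, c ≤ v → v < c + h →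
    (adjVal ω v w ↔ c ≤ w ∧ w < c + h ∧ adjVal η (v - c) (w - c))

/-- Shift of an edge. -/
def shiftE {h n c : ℕ} (hc : c + h ≤ n) (e : EdgeIdx h) : EdgeIdx n :=
  ⟨(⟨c + e.1.1.val, by omega⟩, ⟨c + e.1.2.val, by omega⟩), by
    have h3 : e.1.1.val < e.1.2.val := e.2
    show c + e.1.1.val < c + e.1.2.val
    omega⟩

theorem shiftE_inj {h n c : ℕ} (hc : c + h ≤ n) :
    Function.Injective (shiftE (h := h) hc) := by
  intro e e' he
  have h1 : c + e.1.1.val = c + e'.1.1.val :=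
    congrArg (fun x : EdgeIdx n => x.1.1.val) he
  have h2 : c + e.1.2.val = c + e'.1.2.val :=
    congrArg (fun x : EdgeIdx n => x.1.2.val) he
  apply Subtype.ext
  apply Prod.ext <;> apply Fin.ext <;> omega

open scoped Classical in
/-- The required pattern around a copy. -/
noncomputable def pat {h n c : ℕ} (hc : c + h ≤ n) (η : Sample h) (e : EdgeIdx n) : Bool :=
  decide (∃ e', η e' = true ∧ shiftE hc e' = e)

/-- The short edges touching `[c, c + h)`. -/
def slotE (n h D c : ℕ) : Finset (EdgeIdx n) :=
  Finset.univ.filter fun e => (e.1.1.val ∈ Finset.Ico c (c + h) ∨ e.1.2.val ∈ Finset.Ico c (c + h))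
    ∧ e.1.2.val - e.1.1.val ≤ D

theorem isoCopy_of {h n D c : ℕ} (hc : c + h ≤ n) (hD : h ≤ D) {η : Sample h} {ω : Sample n}
    (hS : ∀ e ∈ slotE n h D c, ω e = pat hc η e) (hf : ¬ FarEdge (Finset.Ico c (c + h)) D ω) :
    IsoCopy η ω c := by
  refine ⟨hc, fun v w hv hv' => ⟨?_, ?_⟩⟩
  · rintro ⟨e, he, hvw⟩
    have ht : e.1.1.val ∈ Finset.Ico c (c + h) ∨ e.1.2.val ∈ Finset.Ico c (c + h) := by
      simp only [Finset.mem_Ico]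
      omega
    have hsh : e.1.2.val - e.1.1.val ≤ D := by
      by_contra hlt
      exact hf ⟨e, he, ht, by omega⟩
    have hp := hS e (by simp only [slotE, Finset.mem_filter]; exact ⟨Finset.mem_univ _, ht, hsh⟩)
    rw [he] at hp
    have hp := of_decide_eq_true hp.symm
    obtain ⟨e', he', rfl⟩ := hp
    have h1 := e'.1.1.2
    have h2 := e'.1.2.2
    simp only [shiftE] at hvw
    refine ⟨by omega, by omega, e', he', ?_⟩
    omega
  · rintro ⟨hw, hw', e', he', hvw⟩
    have h3 : e'.1.1.val < e'.1.2.val := e'.2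
    refine ⟨shiftE hc e', ?_, ?_⟩
    · rw [hS]
      · exact decide_eq_true ⟨e', he', rfl⟩
      · simp only [slotE, Finset.mem_filter, Finset.mem_Ico, shiftE]
        refine ⟨Finset.mem_univ _, ?_, ?_⟩ <;> omega
    · simp only [shiftE]
      omega

theorem slot_prob {p : ℕ → ℝ} (hp : ∀ i, 0 ≤ p i ∧ p i < 1) {c0 : ℝ} (hc0 : 0 < c0)
    (hprod : ∀ n : ℕ, c0 ≤ ∏ i ∈ Finset.Icc 1 n, (1 - p i)) {h n D c : ℕ} (hc : c + h ≤ n)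
    (hD : h ≤ D) (η : Sample h) :
    (∏ e, wt (qn p h e) (η e)) * (c0 ^ h * c0 ^ h) ≤
      ∏ e ∈ slotE n h D c, wt (qn p n e) (pat hc η e) := by
  classical
  rw [← Finset.prod_filter_mul_prod_filter_not (slotE n h D c) (fun e => ∃ e', shiftE hc e' = e)]
  have e1 : (slotE n h D c).filter (fun e => ∃ e', shiftE hc e' = e) =
      Finset.univ.image (shiftE (h := h) hc) := by
    ext e
    simp only [Finset.mem_filter, Finset.mem_image, Finset.mem_univ, true_and]
    constructor
    · exact fun h => h.2
    · rintro ⟨e', rfl⟩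
      have h1 := e'.1.1.2
      have h2 := e'.1.2.2
      refine ⟨?_, e', rfl⟩
      simp only [slotE, Finset.mem_filter, Finset.mem_Ico, shiftE]
      refine ⟨Finset.mem_univ _, ?_, ?_⟩ <;> omega
  have e2 : ∏ e ∈ (slotE n h D c).filter (fun e => ∃ e', shiftE hc e' = e),
      wt (qn p n e) (pat hc η e) = ∏ e, wt (qn p h e) (η e) := by
    rw [e1, Finset.prod_image (fun a _ b _ h => shiftE_inj hc h)]
    refine Finset.prod_congr rfl fun e _ => ?_
    have h1 : qn p n (shiftE hc e) = qn p h e := by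
      unfold qn
      congr 1
      simp only [shiftE]
      omega
    have h2 : pat hc η (shiftE hc e) = η e := by
      unfold pat
      rw [Bool.eq_iff_iff, decide_eq_true_iff]
      constructor
      · rintro ⟨e', he', h⟩
        rwa [← shiftE_inj hc h]
      · intro h
        exact ⟨e, h, rfl⟩
    rw [h1, h2]
  have e3 : ∏ e ∈ (slotE n h D c).filter (fun e => ¬ ∃ e', shiftE hc e' = e),
      wt (qn p n e) (pat hc η e) = ∏ e ∈ (slotE n h D c).filter (fun e => ¬ ∃ e', shiftE hc e' = e),
      (1 - qn p n e) := by
    refine Finset.prod_congr rfl fun e he => ?_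
    have he := (Finset.mem_filter.1 he).2
    have : pat hc η e = false := by
      unfold pat
      rw [decide_eq_false_iff_not]
      rintro ⟨e', -, h⟩
      exact he ⟨e', h⟩
    rw [this]
    simp [wt]
  rw [e2, e3]
  refine mul_le_mul_of_nonneg_left ?_
    (Finset.prod_nonneg fun e _ => wt_nonneg (qn_bd hp h e).1 (qn_bd hp h e).2 _)
  have := prod_touch hp hc0 hprod (Finset.Ico c (c + h))
    ((slotE n h D c).filter (fun e => ¬ ∃ e', shiftE hc e' = e)) (fun e he => by
      have := (Finset.mem_filter.1 he).1
      simp only [slotE, Finset.mem_filter] at this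
      exact this.2.1)
  simpa using this

theorem slot_disj {n h D a t t' : ℕ} (htt : t < t') {e : EdgeIdx n}
    (he : e ∈ slotE n h D (a + t * (h + D))) (he' : e ∈ slotE n h D (a + t' * (h + D))) :
    False := by
  have h0 : t * (h + D) + (h + D) ≤ t' * (h + D) := by
    rw [← Nat.succ_mul]
    exact Nat.mul_le_mul_right _ htt
  simp only [slotE, Finset.mem_filter, Finset.mem_Ico] at he he'
  have h3 : e.1.1.val < e.1.2.val := e.2
  omega

theorem window {p : ℕ → ℝ} (hp : ∀ i, 0 ≤ p i ∧ p i < 1) {c0 : ℝ} (hc0 : 0 < c0)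
    (hprod : ∀ n : ℕ, c0 ≤ ∏ i ∈ Finset.Icc 1 n, (1 - p i)) {h : ℕ} (η : Sample h)
    (hη : ∏ e, wt (qn p h e) (η e) ≠ 0) {ε : ℝ} (hε : 0 < ε) :
    ∃ W : ℕ, ∀ n a, a + W ≤ n → PE (qn p n)
      (fun ω => ¬ ∃ c, a ≤ c ∧ c + h ≤ a + W ∧ IsoCopy η ω c) ≤ ε := by
  classical
  set δ : ℝ := (∏ e, wt (qn p h e) (η e)) * (c0 ^ h * c0 ^ h) with hδ
  have hw0 : 0 ≤ ∏ e, wt (qn p h e) (η e) :=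
    Finset.prod_nonneg fun e _ => wt_nonneg (qn_bd hp h e).1 (qn_bd hp h e).2 _
  have hδ0 : 0 < δ := mul_pos (lt_of_le_of_ne hw0 hη.symm) (by positivity)
  have hδ1 : δ ≤ 1 := by
    have := slot_prob hp hc0 hprod (n := h) (c := 0) (D := h) (by omega) le_rfl η
    refine le_trans this ?_
    rw [← PE_cyl, ← PE_true (q := qn p h)]
    exact PE_mono (qn_bd hp h) fun _ _ => trivial
  obtain ⟨M, hM⟩ := exists_pow_lt_of_lt_one (half_pos hε) (show 1 - δ < 1 by linarith)
  obtain ⟨D, hD, htail⟩ := p_tail hp (p_summable hp hc0 hprod)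
    (ε := ε / (2 * ((M + 1) * (2 * (h + 1))))) (by positivity) h
  refine ⟨M * (h + D), fun n a han => ?_⟩
  have hfit : ∀ t < M, a + t * (h + D) + h ≤ n ∧ a + t * (h + D) + h ≤ a + M * (h + D) := by
    intro t ht
    have h0 : t * (h + D) + (h + D) ≤ M * (h + D) := by
      rw [← Nat.succ_mul]
      exact Nat.mul_le_mul_right _ ht
    constructor <;> omega
  have hS : ∀ m ≤ M, PE (qn p n) (fun ω => ∀ t < m, ∀ hc : a + t * (h + D) + h ≤ n,
      ¬ ∀ e ∈ slotE n h D (a + t * (h + D)), ω e = pat hc η e) ≤ (1 - δ) ^ m := by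
    intro m hm
    induction m with
    | zero =>
      rw [pow_zero, ← PE_true (q := qn p n)]
      exact PE_mono (qn_bd hp n) fun _ _ => trivial
    | succ m ih =>
      have ih := ih (by omega)
      have hc := (hfit m (by omega)).1
      set F : Sample n → Prop := fun ω => ∀ t < m, ∀ hc : a + t * (h + D) + h ≤ n,
        ¬ ∀ e ∈ slotE n h D (a + t * (h + D)), ω e = pat hc η e with hF
      have h1 : PE (qn p n) (fun ω => ∀ t < m + 1, ∀ hc : a + t * (h + D) + h ≤ n,
          ¬ ∀ e ∈ slotE n h D (a + t * (h + D)), ω e = pat hc η e) ≤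
          PE (qn p n) (fun ω => F ω ∧
            ¬ ∀ e ∈ slotE n h D (a + m * (h + D)), ω e = pat hc η e) :=
        PE_mono (qn_bd hp n) fun ω hω =>
          ⟨fun t ht => hω t (by omega), hω m (by omega) hc⟩
      refine h1.trans ?_
      rw [PE_and_not, PE_indep]
      · have h2 := slot_prob hp hc0 hprod (D := D) hc hD η
        rw [← hδ] at h2
        have h3 := PE_nonneg (qn_bd hp n) F
        rw [pow_succ]
        have h4 : PE (qn p n) F * δ ≤ PE (qn p n) F *
          ∏ e ∈ slotE n h D (a + m * (h + D)), wt (qn p n e) (pat hc η e) :=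
          mul_le_mul_of_nonneg_left h2 h3
        have h5 : PE (qn p n) F * (1 - δ) ≤ (1 - δ) ^ m * (1 - δ) :=
          mul_le_mul_of_nonneg_right ih (by linarith)
        linarith
      · intro ω ω' hωω
        refine forall_congr' fun t => forall_congr' fun ht => forall_congr' fun hc => ?_
        refine not_congr (forall_congr' fun e => forall_congr' fun he => ?_)
        rw [hωω e fun he' => slot_disj ht he he']
  have hfar : PE (qn p n) (fun ω => ∃ t ∈ Finset.range M,
      FarEdge (Finset.Ico (a + t * (h + D)) (a + t * (h + D) + h)) D ω) ≤ ε / 2 := by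
    refine (PE_exists (qn_bd hp n) _ _).trans ?_
    have : ∀ t ∈ Finset.range M, PE (qn p n)
        (FarEdge (Finset.Ico (a + t * (h + D)) (a + t * (h + D) + h)) D) ≤
        h * (2 * (ε / (2 * ((M + 1) * (2 * (h + 1)))))) := by
      intro t _
      have := PE_far hp (n := n) htail (Finset.Ico (a + t * (h + D)) (a + t * (h + D) + h))
      simpa using this
    refine (Finset.sum_le_card_nsmul _ _ _ this).trans ?_
    rw [Finset.card_range, nsmul_eq_mul]
    have hM1 : (0 : ℝ) < M + 1 := by positivity
    have hh1 : (0 : ℝ) < h + 1 := by positivity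
    have e1 : (M : ℝ) * (h * (2 * (ε / (2 * ((M + 1) * (2 * (h + 1))))))) =
      (ε / 2) * ((M / (M + 1)) * (h / (h + 1))) := by
      field_simp
    rw [e1]
    refine mul_le_of_le_one_right (by positivity) ?_
    refine mul_le_one₀ ?_ (by positivity) ?_
    · rw [div_le_one hM1]; linarith
    · rw [div_le_one hh1]; linarith
  have hfin := PE_or (qn_bd hp n) (fun ω => ∀ t < M, ∀ hc : a + t * (h + D) + h ≤ n,
      ¬ ∀ e ∈ slotE n h D (a + t * (h + D)), ω e = pat hc η e) (fun ω => ∃ t ∈ Finset.range M,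
      FarEdge (Finset.Ico (a + t * (h + D)) (a + t * (h + D) + h)) D ω)
  have hbd : PE (qn p n) (fun ω => ¬ ∃ c, a ≤ c ∧ c + h ≤ a + M * (h + D) ∧ IsoCopy η ω c) ≤ _ :=
    (PE_mono (qn_bd hp n) ?_).trans hfin
  · have := hS M le_rfl
    linarith
  · intro ω hω
    by_contra hcon
    push Not at hcon
    obtain ⟨⟨t, ht, hc, hpat⟩, hnf⟩ := hcon
    exact hω ⟨a + t * (h + D), by omega, (hfit t ht).2,
      isoCopy_of hc hD hpat (hnf t (Finset.mem_range.2 ht))⟩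

/-! ### Saturation -/

/-- Weight of an outcome. -/
noncomputable def gw (p : ℕ → ℝ) {n : ℕ} (ω : Sample n) : ℝ := ∏ e, wt (qn p n e) (ω e)

/-- Types realized far away from the two ends. -/
def Realizable (p : ℕ → ℝ) (j : ℕ) (τ : T j 1) : Prop :=
  ∃ h, ∃ η : Sample h, gw p η ≠ 0 ∧ ∃ x : Fin h,
    (∀ e : Fin h, (e.val = 0 ∨ e.val + 1 = h) → ¬ (gSt η).Near (2 ^ j) e x) ∧
    tp (gSt η) j 1 (fun _ => x) = τ

/-- All such types are realized far away from given tuples. -/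
def Sat (p : ℕ → ℝ) (K k : ℕ) {n : ℕ} (ω : Sample n) : Prop :=
  ∀ j < k, ∀ τ : T j 1, Realizable p j τ → ∀ l ≤ K, ∀ w' : Fin l → Fin n,
    ∃ y, τ = tp (gSt ω) j 1 (fun _ => y) ∧ ∀ c, ¬ (gSt ω).Near (2 ^ j) (w' c) y

theorem adj_symm {n : ℕ} {ω : Sample n} {u v : Fin n} (h : sampleAdj ω u v) :
    sampleAdj ω v u := by
  obtain ⟨e, he, h⟩ := h
  exact ⟨e, he, h.symm⟩

theorem copy_locEmb {h n c : ℕ} {η : Sample h} {ω : Sample n} (H : IsoCopy η ω c) :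
    LocEmb (gSt η) (gSt ω) (fun x : Fin h => ⟨c + x.val, by have := H.1; omega⟩)
      {x | x.val ≠ 0 ∧ x.val + 1 ≠ h} := by
  have hadj : ∀ x x' : Fin h, sampleAdj ω ⟨c + x.val, by have := H.1; omega⟩
      ⟨c + x'.val, by have := H.1; omega⟩ ↔ sampleAdj η x x' := by
    intro x x'
    have := H.2 (c + x.val) (c + x'.val) (by omega) (by omega)
    unfold sampleAdj
    rw [this]
    simp
  refine ⟨?_, fun x _ x' => hadj x x', fun x _ x' => hadj x' x, ?_, ?_, ?_⟩
  · intro x x' hx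
    have : c + x.val = c + x'.val := congrArg Fin.val hx
    exact Fin.ext (by omega)
  · intro x _ x'
    show c + x.val = c + x'.val + 1 ↔ x.val = x'.val + 1
    omega
  · intro x _ x'
    show c + x'.val = c + x.val + 1 ↔ x'.val = x.val + 1
    omega
  · rintro x ⟨hx, hx'⟩ y hl
    have hxl := x.2
    suffices hy : c ≤ y.val ∧ y.val < c + h from
      ⟨⟨y.val - c, by omega⟩, Fin.ext (by show y.val = c + (y.val - c); omega)⟩
    have key : sampleAdj ω ⟨c + x.val, by have := H.1; omega⟩ y → c ≤ y.val ∧ y.val < c + h := by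
      intro ha
      have := (H.2 (c + x.val) y.val (by omega) (by omega)).1 ha
      exact ⟨this.1, this.2.1⟩
    rcases hl with hl | hl | hl | hl
    · exact key hl
    · exact key (adj_symm hl)
    · have hl : c + x.val = y.val + 1 := hl
      omega
    · have hl : y.val = c + x.val + 1 := hl
      omega

theorem copy_point {h n c j : ℕ} {η : Sample h} {ω : Sample n} (H : IsoCopy η ω c) {x : Fin h}
    (hx : ∀ e : Fin h, (e.val = 0 ∨ e.val + 1 = h) → ¬ (gSt η).Near (2 ^ j) e x) :
    ∃ y, tp (gSt η) j 1 (fun _ => x) = tp (gSt ω) j 1 (fun _ => y) ∧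
      ∀ z : Fin n, (gSt ω).Near (2 ^ j) z y → c ≤ z.val ∧ z.val < c + h := by
  have hU : ∀ x', (gSt η).Near (2 ^ j) x x' → x' ∈ {x : Fin h | x.val ≠ 0 ∧ x.val + 1 ≠ h} := by
    intro x' hx'
    constructor
    · intro h0
      exact hx x' (Or.inl h0) hx'.symm
    · intro h0
      exact hx x' (Or.inr h0) hx'.symm
  refine ⟨_, (copy_locEmb H).tp_eq (fun _ => hU), ?_⟩
  intro z hz
  obtain ⟨x', rfl, -⟩ := (copy_locEmb H).near hU hz.symm
  have := x'.2
  constructor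
  · show c ≤ c + x'.val
    omega
  · show c + x'.val < c + h
    omega

theorem sat_prob {p : ℕ → ℝ} (hp : ∀ i, 0 ≤ p i ∧ p i < 1) {c0 : ℝ} (hc0 : 0 < c0)
    (hprod : ∀ n : ℕ, c0 ≤ ∏ i ∈ Finset.Icc 1 n, (1 - p i)) (K k : ℕ) {ε : ℝ} (hε : 0 < ε) :
    ∃ N, ∀ n ≥ N, PE (qn p n) (fun ω => ¬ Sat p K k ω) ≤ ε := by
  classical
  have hfin : ∀ j, Finite (T j 1) := fun j => T_finite j 1
  let I : Type := Σ j : Fin k, {τ : T j.val 1 // Realizable p j.val τ}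
  have : Finite I := inferInstance
  have := Fintype.ofFinite I
  choose h η hη x hx htp using fun i : I => i.2.2
  set ε' : ℝ := ε / ((Fintype.card I + 1) * (K + 1)) with hε'
  have hε'0 : 0 < ε' := by positivity
  choose W hW using fun i : I => window hp hc0 hprod (η i) (hη i) hε'0
  set B : ℕ := Finset.univ.sup W + 1 with hB
  have hWB : ∀ i, W i ≤ B := fun i => by
    have := Finset.le_sup (f := W) (Finset.mem_univ i)
    omega
  refine ⟨(K + 1) * B, fun n hn => ?_⟩
  have hbad : PE (qn p n) (fun ω => ∃ it ∈ (Finset.univ : Finset I) ×ˢ Finset.range (K + 1),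
      ¬ ∃ c, it.2 * B ≤ c ∧ c + h it.1 ≤ it.2 * B + W it.1 ∧ IsoCopy (η it.1) ω c) ≤ ε := by
    refine (PE_exists (qn_bd hp n) _ _).trans ?_
    refine (Finset.sum_le_card_nsmul _ _ ε' ?_).trans ?_
    · rintro ⟨i, t⟩ hit
      have ht : t < K + 1 := by simpa using hit
      refine hW i n (t * B) ?_
      have h0 : t * B + B ≤ (K + 1) * B := by
        rw [← Nat.succ_mul]
        exact Nat.mul_le_mul_right _ ht
      have := hWB i
      omega
    · rw [Finset.card_product, Finset.card_range, Finset.card_univ, nsmul_eq_mul, hε']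
      push_cast
      rw [mul_div_assoc', div_le_iff₀ (by positivity), mul_comm]
      refine mul_le_mul_of_nonneg_left ?_ hε.le
      refine mul_le_mul_of_nonneg_right ?_ (by positivity)
      linarith
  refine le_trans (PE_mono (qn_bd hp n) ?_) hbad
  intro ω hω
  by_contra hcon
  push Not at hcon
  refine hω ?_
  intro j hj τ hτ l hl w'
  obtain ⟨t, ht, htw⟩ : ∃ t < K + 1, ∀ c, (w' c).val / B ≠ t := by
    by_contra hno
    push Not at hno
    have hsub : Finset.range (K + 1) ⊆ Finset.univ.image (fun c => (w' c).val / B) := by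
      intro t ht
      obtain ⟨c, hc⟩ := hno t (Finset.mem_range.1 ht)
      exact Finset.mem_image.2 ⟨c, Finset.mem_univ _, hc⟩
    have h1 := Finset.card_le_card hsub
    have h2 := Finset.card_image_le (s := Finset.univ) (f := fun c => (w' c).val / B)
    simp only [Finset.card_range, Finset.card_univ, Fintype.card_fin] at h1 h2
    omega
  let i : I := ⟨⟨j, hj⟩, ⟨τ, hτ⟩⟩
  obtain ⟨c, hc1, hc2, hcopy⟩ := hcon (i, t) (by simp; omega)
  obtain ⟨y, hy, hnear⟩ := copy_point hcopy (hx i)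
  refine ⟨y, (htp i).symm.trans hy, fun d hd => ?_⟩
  have h1 : c ≤ (w' d).val ∧ (w' d).val < c + h i := hnear _ hd
  have h2 := hWB i
  refine htw d ?_
  have hc1 : t * B ≤ c := hc1
  have hc2 : c + h i ≤ t * B + W i := hc2
  refine Nat.div_eq_of_lt_le (by omega) ?_
  rw [Nat.succ_mul]
  omega

theorem ext1_of_sat {p : ℕ → ℝ} {K k m m' : ℕ} {ω : Sample (m + 1)} {ω' : Sample (m' + 1)}
    (h0 : gw p ω ≠ 0) (hs : Sat p K k ω') :
    Ext1 (gSt ω) (gSt ω') K k 0 (Fin.last m) := by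
  intro j hj x h1 h2 l hl w'
  refine hs j hj _ ⟨m + 1, ω, h0, x, ?_, rfl⟩ l hl w'
  rintro e (he | he)
  · have : e = 0 := Fin.ext he
    rwa [this]
  · have : e = Fin.last m := Fin.ext (by simp; omega)
    rwa [this]

/-- The tuple of the two ends. -/
def ends (m : ℕ) : Fin 2 → Fin (m + 1) := ![0, Fin.last m]

theorem sentence_iff {p : ℕ → ℝ} {m m' : ℕ} {ω : Sample (m + 1)} {ω' : Sample (m' + 1)}
    (ψ : Lplus.Sentence) (h0 : gw p ω ≠ 0) (h0' : gw p ω' ≠ 0)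
    (hs : Sat p (2 + qd ψ) (qd ψ) ω) (hs' : Sat p (2 + qd ψ) (qd ψ) ω')
    (h : tp (gSt ω) (qd ψ) 2 (ends m) = tp (gSt ω') (qd ψ) 2 (ends m')) :
    @Language.Sentence.Realize _ _ (plusStructure ω) ψ ↔
      @Language.Sentence.Realize _ _ (plusStructure ω') ψ := by
  have := game ω ω' (ext1_of_sat h0 hs') (ext1_of_sat h0' hs) ψ (ends m) (ends m') 0 1
    (fun a => a.elim0) rfl rfl rfl rfl le_rfl le_rfl le_rfl h
  unfold Language.Sentence.Realize Language.Formula.Realize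
  convert this using 2

/-! ### The two ends -/

/-- Pairs of vertices on the same side. -/
abbrev EL (L : ℕ) := {e : EdgeIdx (2 * L) // (e.1.1.val < L ↔ e.1.2.val < L)}

/-- The structure of the two ends. -/
def cSt {L : ℕ} (ω : EL L → Bool) : St (Fin (2 * L)) where
  adj := fun x y => ∃ e : EL L, ω e = true ∧
    ((e.1.1.1 = x ∧ e.1.1.2 = y) ∨ (e.1.1.1 = y ∧ e.1.1.2 = x))
  succ := fun x y => x.val = y.val + 1

/-- Placement of the two ends. -/
def place {L n : ℕ} (hn : 2 * L ≤ n) (x : Fin (2 * L)) : Fin n :=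
  ⟨if x.val < L then x.val else x.val + (n - 2 * L), by split_ifs <;> omega⟩

theorem place_lt {L n : ℕ} (hn : 2 * L ≤ n) {x : Fin (2 * L)} (h : x.val < L) :
    (place hn x).val = x.val := by simp [place, h]

theorem place_ge {L n : ℕ} (hn : 2 * L ≤ n) {x : Fin (2 * L)} (h : ¬ x.val < L) :
    (place hn x).val = x.val + (n - 2 * L) := by simp [place, h]

/-- Placement of edges. -/
def placeE {L n : ℕ} (hn : 2 * L ≤ n) (e : EL L) : EdgeIdx n :=
  ⟨(place hn e.1.1.1, place hn e.1.1.2), by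
    have h1 : e.1.1.1.val < e.1.1.2.val := e.1.2
    have h2 := e.2
    show (place hn e.1.1.1).val < (place hn e.1.1.2).val
    by_cases h : e.1.1.1.val < L
    · rw [place_lt hn h, place_lt hn (h2.1 h)]; exact h1
    · rw [place_ge hn h, place_ge hn (fun h' => h (h2.2 h'))]; omega⟩

theorem place_inj {L n : ℕ} (hn : 2 * L ≤ n) : Function.Injective (place (L := L) hn) := by
  intro x y h
  have h : (place hn x).val = (place hn y).val := congrArg Fin.val h
  have hx := x.2
  have hy := y.2
  apply Fin.ext
  by_cases h1 : x.val < L <;> by_cases h2 : y.val < L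
  · rwa [place_lt hn h1, place_lt hn h2] at h
  · rw [place_lt hn h1, place_ge hn h2] at h; omega
  · rw [place_ge hn h1, place_lt hn h2] at h; omega
  · rw [place_ge hn h1, place_ge hn h2] at h; omega

theorem placeE_inj {L n : ℕ} (hn : 2 * L ≤ n) : Function.Injective (placeE (L := L) hn) := by
  intro e e' h
  have h1 : place hn e.1.1.1 = place hn e'.1.1.1 := congrArg (fun x : EdgeIdx n => x.1.1) h
  have h2 : place hn e.1.1.2 = place hn e'.1.1.2 := congrArg (fun x : EdgeIdx n => x.1.2) h
  exact Subtype.ext (Subtype.ext (Prod.ext (place_inj hn h1) (place_inj hn h2)))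

theorem placeE_q {L n : ℕ} (p : ℕ → ℝ) (hn : 2 * L ≤ n) (e : EL L) :
    qn p n (placeE hn e) = qn p (2 * L) e.1 := by
  unfold qn
  congr 1
  show (place hn e.1.1.2).val - (place hn e.1.1.1).val = _
  have h2 := e.2
  by_cases h : e.1.1.1.val < L
  · rw [place_lt hn h, place_lt hn (h2.1 h)]
  · rw [place_ge hn h, place_ge hn (fun h' => h (h2.2 h'))]; omega

theorem cSt_adj {L n : ℕ} (hn : 2 * L ≤ n) (ω : Sample n) (x y : Fin (2 * L)) :
    (cSt (fun e => ω (placeE hn e))).adj x y ↔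
      (x.val < L ↔ y.val < L) ∧ sampleAdj ω (place hn x) (place hn y) := by
  constructor
  · rintro ⟨e, he, ⟨rfl, rfl⟩ | ⟨rfl, rfl⟩⟩
    · exact ⟨e.2, placeE hn e, he, Or.inl ⟨rfl, rfl⟩⟩
    · exact ⟨e.2.symm, placeE hn e, he, Or.inr ⟨rfl, rfl⟩⟩
  · rintro ⟨hs, e, he, h⟩
    have hlt : e.1.1.val < e.1.2.val := e.2
    have mono : ∀ x y : Fin (2 * L), (x.val < L ↔ y.val < L) →
        (place hn x).val < (place hn y).val → x < y := by
      intro x y hs hl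
      show x.val < y.val
      by_cases h : x.val < L
      · rwa [place_lt hn h, place_lt hn (hs.1 h)] at hl
      · rw [place_ge hn h, place_ge hn (fun h' => h (hs.2 h'))] at hl; omega
    rcases h with ⟨h1, h2⟩ | ⟨h1, h2⟩
    · refine ⟨⟨⟨(x, y), mono x y hs (by omega)⟩, hs⟩, ?_, Or.inl ⟨rfl, rfl⟩⟩
      rw [← he]
      exact congrArg ω (Subtype.ext (Prod.ext (Fin.ext h1.symm) (Fin.ext h2.symm)))
    · refine ⟨⟨⟨(y, x), mono y x hs.symm (by omega)⟩, hs.symm⟩, ?_, Or.inr ⟨rfl, rfl⟩⟩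
      rw [← he]
      exact congrArg ω (Subtype.ext (Prod.ext (Fin.ext h1.symm) (Fin.ext h2.symm)))

/-- The vertices near the ends. -/
def nearEnds (n ℓ : ℕ) : Finset ℕ := Finset.range ℓ ∪ Finset.Ico (n - ℓ) n

theorem adj_dist {n D : ℕ} {V : Finset ℕ} {ω : Sample n} (hf : ¬ FarEdge V D ω) {u v : Fin n}
    (h : sampleAdj ω u v) (hu : u.val ∈ V) : u.val ≤ v.val + D ∧ v.val ≤ u.val + D := by
  obtain ⟨e, he, h⟩ := h
  have hlt : e.1.1.val < e.1.2.val := e.2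
  by_contra hcon
  refine hf ⟨e, he, ?_, by omega⟩
  rcases h with ⟨h1, h2⟩ | ⟨h1, h2⟩
  · left; rwa [h1]
  · right; rwa [h2]

/-- The local type of the two ends is determined by their neighbourhoods. -/
theorem ends_tp {k m : ℕ} {Ls Df : ℕ → ℕ} (h0 : Ls 0 = 1)
    (hs : ∀ i, Ls (i + 1) = Ls i + Df i + 1) {L0 : ℕ} (hL : L0 + 1 = 2 * Ls (2 ^ k + 1))
    (hn : 2 * Ls (2 ^ k + 1) ≤ m + 1) (ω : Sample (m + 1))
    (hf : ∀ i ≤ 2 ^ k, ¬ FarEdge (nearEnds (m + 1) (Ls i)) (Df i) ω) :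
    tp (cSt (fun e => ω (placeE hn e))) k 2 (fun a => Fin.cast hL (ends L0 a)) =
      tp (gSt ω) k 2 (ends m) := by
  set K := 2 ^ k with hK
  set L := Ls (K + 1) with hLdef
  have hmono : Monotone Ls := monotone_nat_of_le_succ fun i => by rw [hs]; omega
  have hLK : L = Ls K + Df K + 1 := hs K
  have hpos : 1 ≤ Ls K := h0 ▸ hmono (Nat.zero_le K)
  have mem : ∀ ℓ v, v ∈ nearEnds (m + 1) ℓ ↔ v < ℓ ∨ (m + 1 - ℓ ≤ v ∧ v < m + 1) := by
    intro ℓ v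
    simp [nearEnds]
  have pmem : ∀ i ≤ K, ∀ x : Fin (2 * L), (x.val < Ls i ∨ 2 * L ≤ x.val + Ls i) →
      (place hn x).val ∈ nearEnds (m + 1) (Ls i) := by
    intro i hi x hx
    have hxl := x.2
    have := hmono hi
    rw [mem]
    by_cases h : x.val < L
    · rw [place_lt hn h]; omega
    · rw [place_ge hn h]; omega
  -- distances along edges
  have pdist : ∀ i ≤ K, ∀ x : Fin (2 * L), (x.val < Ls i ∨ 2 * L ≤ x.val + Ls i) → ∀ v,
      sampleAdj ω (place hn x) v → (place hn x).val ≤ v.val + Df i ∧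
        v.val ≤ (place hn x).val + Df i :=
    fun i hi x hx v ha => adj_dist (hf i hi) ha (pmem i hi x hx)
  have side : ∀ x : Fin (2 * L), (x.val < Ls K ∨ 2 * L ≤ x.val + Ls K) → ∀ y,
      sampleAdj ω (place hn x) (place hn y) → (x.val < L ↔ y.val < L) := by
    intro x hx y ha
    have := pdist K le_rfl x hx _ ha
    have hxl := x.2
    have hyl := y.2
    by_cases h1 : x.val < L <;> by_cases h2 : y.val < L
    · tauto
    · rw [place_lt hn h1, place_ge hn h2] at this; omega
    · rw [place_ge hn h1, place_lt hn h2] at this; omega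
    · tauto
  have psucc : ∀ x y : Fin (2 * L), ((x.val < Ls K ∨ 2 * L ≤ x.val + Ls K) ∨
      (y.val < Ls K ∨ 2 * L ≤ y.val + Ls K)) →
      ((place hn x).val = (place hn y).val + 1 ↔ x.val = y.val + 1) := by
    intro x y hx
    have hxl := x.2
    have hyl := y.2
    by_cases h1 : x.val < L <;> by_cases h2 : y.val < L
    · rw [place_lt hn h1, place_lt hn h2]
    · rw [place_lt hn h1, place_ge hn h2]; omega
    · rw [place_ge hn h1, place_lt hn h2]; omega
    · rw [place_ge hn h1, place_ge hn h2]; omega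
  have H : LocEmb (cSt (fun e => ω (placeE hn e))) (gSt ω) (place hn)
      {x | x.val < Ls K ∨ 2 * L ≤ x.val + Ls K} := by
    refine ⟨place_inj hn, ?_, ?_, ?_, ?_, ?_⟩
    · intro x hx y
      rw [cSt_adj hn]
      exact ⟨fun h => ⟨side x hx y h, h⟩, fun h => h.2⟩
    · intro x hx y
      rw [cSt_adj hn]
      exact ⟨fun h => ⟨(side x hx y (adj_symm h)).symm, h⟩, fun h => h.2⟩
    · intro x hx y
      exact psucc x y (Or.inl hx)
    · intro x hx y
      exact psucc y x (Or.inr hx)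
    · intro x hx y hl
      have hx : x.val < Ls K ∨ 2 * L ≤ x.val + Ls K := hx
      have hxl := x.2
      have hyl := y.2
      suffices hy : y.val < L ∨ m + 1 ≤ y.val + L by
        by_cases h1 : y.val < L
        · exact ⟨⟨y.val, by omega⟩, Fin.ext (by rw [place_lt hn (by exact h1)])⟩
        · refine ⟨⟨y.val - (m + 1 - 2 * L), by omega⟩, Fin.ext ?_⟩
          rw [place_ge hn (by show ¬ y.val - (m + 1 - 2 * L) < L; omega)]
          show y.val = y.val - (m + 1 - 2 * L) + (m + 1 - 2 * L)
          omega
      have hd : (place hn x).val ≤ y.val + (Df K + 1) ∧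
          y.val ≤ (place hn x).val + Df K + 1 := by
        rcases hl with hl | hl | hl | hl
        · have := pdist K le_rfl x hx y hl
          omega
        · have := pdist K le_rfl x hx y (adj_symm hl)
          omega
        · have hl : (place hn x).val = y.val + 1 := hl
          omega
        · have hl : y.val = (place hn x).val + 1 := hl
          omega
      by_cases h1 : x.val < L
      · rw [place_lt hn h1] at hd; omega
      · rw [place_ge hn h1] at hd; omega
  have ball : ∀ d ≤ K, ∀ e x : Fin (2 * L), (e.val = 0 ∨ e.val + 1 = 2 * L) →
      (cSt (fun e => ω (placeE hn e))).Near d e x → x.val < Ls d ∨ 2 * L ≤ x.val + Ls d := by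
    intro d
    induction d with
    | zero =>
      intro _ e x he hx
      have : e = x := hx
      subst this
      omega
    | succ d ih =>
      intro hd e x he hx
      obtain ⟨z, hz, hl⟩ := hx
      have hz := ih (by omega) e z he hz
      have hsd := hs d
      have hmd := hmono (show d ≤ K by omega)
      have hxl := x.2
      have hzl := z.2
      rcases hl with rfl | hl
      · omega
      have key : sampleAdj ω (place hn z) (place hn x) → (z.val < L ↔ x.val < L) →
          x.val < Ls (d + 1) ∨ 2 * L ≤ x.val + Ls (d + 1) := by
        intro ha hside
        have hdist := pdist d (by omega) z hz _ ha
        by_cases h1 : z.val < L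
        · rw [place_lt hn h1, place_lt hn (hside.1 h1)] at hdist; omega
        · rw [place_ge hn h1, place_ge hn (fun h => h1 (hside.2 h))] at hdist; omega
      rcases hl with hl | hl | hl | hl
      · rw [cSt_adj hn] at hl
        exact key hl.2 hl.1
      · rw [cSt_adj hn] at hl
        exact key (adj_symm hl.2) hl.1.symm
      · have hl : z.val = x.val + 1 := hl
        omega
      · have hl : x.val = z.val + 1 := hl
        omega
  rw [H.tp_eq]
  · congr 1
    funext a
    apply Fin.ext
    fin_cases a
    · show (place hn (Fin.cast hL 0)).val = 0
      rw [place_lt hn]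
      · rfl
      · show 0 < L
        omega
    · show (place hn (Fin.cast hL (Fin.last L0))).val = m
      rw [place_ge hn]
      · show L0 + _ = _
        omega
      · show ¬ L0 < L
        omega
  · intro a x hx
    refine ball K le_rfl _ x ?_ hx
    fin_cases a
    · left; rfl
    · right
      show L0 + 1 = _
      exact hL

theorem ends_prob {p : ℕ → ℝ} (hp : ∀ i, 0 ≤ p i ∧ p i < 1) {c0 : ℝ} (hc0 : 0 < c0)
    (hprod : ∀ n : ℕ, c0 ≤ ∏ i ∈ Finset.Icc 1 n, (1 - p i)) (k : ℕ) (S : Set (T k 2)) {ε : ℝ}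
    (hε : 0 < ε) : ∃ N, ∃ r : ℝ, ∀ m ≥ N,
      |PE (qn p (m + 1)) (fun ω => tp (gSt ω) k 2 (ends m) ∈ S) - r| ≤ ε := by
  classical
  set K := 2 ^ k with hK
  have hη : ∀ ℓ : ℕ, ∃ D, ∀ s : Finset ℕ, (∀ i ∈ s, D < i) →
      ∑ i ∈ s, p i ≤ ε / ((K + 1) * (4 * (ℓ + 1))) := by
    intro ℓ
    obtain ⟨D, -, h⟩ := p_tail hp (p_summable hp hc0 hprod)
      (ε := ε / ((K + 1) * (4 * (ℓ + 1)))) (by positivity) 0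
    exact ⟨D, h⟩
  choose Dl hDl using hη
  obtain ⟨Ls, h0, hs⟩ : ∃ Ls : ℕ → ℕ, Ls 0 = 1 ∧ ∀ i, Ls (i + 1) = Ls i + Dl (Ls i) + 1 :=
    ⟨fun i => Nat.rec 1 (fun _ l => l + Dl l + 1) i, rfl, fun _ => rfl⟩
  set L := Ls (K + 1) with hLdef
  have hL : 2 * L - 1 + 1 = 2 * L := by
    have := hs K
    omega
  refine ⟨2 * L, PE (fun e : EL L => qn p (2 * L) e.1) (fun ω =>
    tp (cSt ω) k 2 (fun a => Fin.cast hL (ends (2 * L - 1) a)) ∈ S), fun m hm => ?_⟩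
  have hn : 2 * L ≤ m + 1 := by omega
  have hres := PE_restrict (q := qn p (m + 1)) (placeE hn) (placeE_inj hn) (fun ω =>
    tp (cSt ω) k 2 (fun a => Fin.cast hL (ends (2 * L - 1) a)) ∈ S)
  simp only [placeE_q] at hres
  rw [← hres]
  refine PE_close (qn_bd hp _) (D := fun ω => ∃ i ∈ Finset.range (K + 1),
    FarEdge (nearEnds (m + 1) (Ls i)) (Dl (Ls i)) ω) ?_ ?_
  · refine (PE_exists (qn_bd hp _) _ _).trans ?_
    refine (Finset.sum_le_card_nsmul _ _ (ε / (K + 1)) fun i _ => ?_).trans ?_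
    · refine (PE_far hp (hDl (Ls i)) _).trans ?_
      have hcard : (nearEnds (m + 1) (Ls i)).card ≤ 2 * Ls i := by
        refine (Finset.card_union_le _ _).trans ?_
        simp only [Finset.card_range, Nat.card_Ico]
        omega
      have hcard' : ((nearEnds (m + 1) (Ls i)).card : ℝ) ≤ 2 * Ls i := by exact_mod_cast hcard
      refine (mul_le_mul_of_nonneg_right hcard' (by positivity)).trans ?_
      have e1 : 2 * (Ls i : ℝ) * (2 * (ε / ((K + 1) * (4 * (Ls i + 1))))) =
          ε / (K + 1) * (Ls i / (Ls i + 1)) := by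
        field_simp
        ring
      rw [e1]
      refine mul_le_of_le_one_right (by positivity) ?_
      rw [div_le_one (by positivity)]
      linarith
    · rw [Finset.card_range, nsmul_eq_mul]
      push_cast
      rw [mul_div_cancel₀ _ (by positivity)]
  · intro ω _ hD
    push Not at hD
    have := ends_tp (k := k) (Df := fun i => Dl (Ls i)) h0 hs hL hn ω
      (fun i hi => hD i (Finset.mem_range.2 (by omega)))
    rw [this]

theorem near_const {p : ℕ → ℝ} (hp : ∀ i, 0 ≤ p i ∧ p i < 1) {c0 : ℝ} (hc0 : 0 < c0)
    (hprod : ∀ n : ℕ, c0 ≤ ∏ i ∈ Finset.Icc 1 n, (1 - p i)) (ψ : Lplus.Sentence) {ε : ℝ}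
    (hε : 0 < ε) : ∃ N, ∃ r : ℝ, ∀ n ≥ N, |ProbPlus p n ψ - r| ≤ 2 * ε := by
  let S : Set (T (qd ψ) 2) := {τ | ∃ m, ∃ ω : Sample (m + 1), gw p ω ≠ 0 ∧
    Sat p (2 + qd ψ) (qd ψ) ω ∧ tp (gSt ω) (qd ψ) 2 (ends m) = τ ∧
    @Language.Sentence.Realize _ _ (plusStructure ω) ψ}
  obtain ⟨N1, h1⟩ := sat_prob hp hc0 hprod (2 + qd ψ) (qd ψ) hε
  obtain ⟨N2, r, h2⟩ := ends_prob hp hc0 hprod (qd ψ) S hε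
  refine ⟨N1 + N2 + 1, r, fun n hn => ?_⟩
  obtain ⟨m, rfl⟩ : ∃ m, n = m + 1 := ⟨n - 1, by omega⟩
  have e1 := h2 m (by omega)
  have e0 : ProbPlus p (m + 1) ψ = PE (qn p (m + 1))
      (fun ω => @Language.Sentence.Realize _ _ (plusStructure ω) ψ) := Pr_eq p (m + 1) _
  have e2 : |ProbPlus p (m + 1) ψ -
      PE (qn p (m + 1)) (fun ω => tp (gSt ω) (qd ψ) 2 (ends m) ∈ S)| ≤ ε := by
    rw [e0]
    refine PE_close (qn_bd hp _) (h1 (m + 1) (by omega)) ?_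
    intro ω h0 hD
    have hs : Sat p (2 + qd ψ) (qd ψ) ω := not_not.1 hD
    constructor
    · intro h
      exact ⟨m, ω, h0, hs, rfl, h⟩
    · rintro ⟨m', ω', h0', hs', htp, h⟩
      exact (sentence_iff ψ h0' h0 hs' hs htp).1 h
  rw [abs_le] at *
  constructor <;> linarith [e1.1, e1.2, e2.1, e2.2]


/-- If `0 ≤ p i < 1` for all `i` and `∏_{i=1}^∞ (1 - p i) > 0` (i.e. the
partial products are bounded below by a positive constant), then for every sentence `ψ` of
the language `L₊`, `Prob(n, p̄; ψ)` converges as `n → ∞`. -/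
theorem statement_4 (p : ℕ → ℝ) (hp : ∀ i, 0 ≤ p i ∧ p i < 1)
    (hprod : ∃ c : ℝ, 0 < c ∧ ∀ n : ℕ, c ≤ ∏ i ∈ Finset.Icc 1 n, (1 - p i))
    (ψ : Lplus.Sentence) :
    ∃ ℓ : ℝ, Tendsto (fun n => ProbPlus p n ψ) atTop (nhds ℓ) := by
  obtain ⟨c0, hc0, hprod⟩ := hprod
  have hC : CauchySeq (fun n => ProbPlus p n ψ) := by
    rw [Metric.cauchySeq_iff']
    intro ε hε
    obtain ⟨N, r, h⟩ := near_const hp hc0 hprod ψ (ε := ε / 5) (by positivity)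
    refine ⟨N, fun n hn => ?_⟩
    have h1 := abs_le.1 (h n hn)
    have h2 := abs_le.1 (h N le_rfl)
    rw [Real.dist_eq, abs_lt]
    constructor <;> linarith [h1.1, h1.2, h2.1, h2.2]
  exact cauchySeq_tendsto_of_complete hC

end RandomGraph
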